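/- Let K ⊂ ℝ^3 be a convex body such that every plane section of K through a fixed interior point p is centrally symmetric, and p is not a center of symmetry of K. Then K is an ellipsoid. -/

import Mathlib

noncomputable section

open Metric Set MeasureTheory

/-- Euclidean n-space. -/
abbrev Euc (n : ℕ) := EuclideanSpace ℝ (Fin n)

/-- A convex body: compact, convex, with nonempty interior. -/
def IsConvexBody {n : ℕ} (K : Set (Euc n)) : Prop :=
  IsCompact K ∧ Convex ℝ K ∧ (interior K).Nonempty

/-- `f` is the (orthogonal) reflection of the space with fixed-point set the affine
subspace `A`: an involutive isometry whose fixed points are exactly `A`. -/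
def IsReflectionFix {n : ℕ} (f : Euc n → Euc n) (A : AffineSubspace ℝ (Euc n)) : Prop :=
  Isometry f ∧ f ∘ f = id ∧ {x | f x = x} = (A : Set (Euc n))

/-- `A` is a plane of symmetry of the set `K`. -/
def IsSymmetryPlane {n : ℕ} (K : Set (Euc n)) (A : AffineSubspace ℝ (Euc n)) : Prop :=
  ∃ f : Euc n → Euc n, IsReflectionFix f A ∧ f '' K = K

/-- `L` is a plane of symmetry of the set `s` within the flat `P`:
some involutive isometry of the ambient space preserves `P`, has exactly `L` as
fixed-point set inside `P`, and maps `s` onto itself. -/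
def IsSymmPlaneOfIn {n : ℕ} (s : Set (Euc n)) (P L : AffineSubspace ℝ (Euc n)) : Prop :=
  L ≤ P ∧ ∃ f : Euc n → Euc n, Isometry f ∧ f ∘ f = id ∧
    f '' (P : Set (Euc n)) = (P : Set (Euc n)) ∧
    {x ∈ (P : Set (Euc n)) | f x = x} = (L : Set (Euc n)) ∧ f '' s = s

/-- `L` is a plane of symmetry of the section `P ∩ K` within the flat `P`. -/
def IsSectionSymmPlane {n : ℕ} (K : Set (Euc n)) (P L : AffineSubspace ℝ (Euc n)) : Prop :=
  IsSymmPlaneOfIn ((P : Set (Euc n)) ∩ K) P L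

/-- A hyperplane: a nonempty affine subspace whose direction has dimension `n - 1`. -/
def IsHyperplane {n : ℕ} (A : AffineSubspace ℝ (Euc n)) : Prop :=
  (A : Set (Euc n)).Nonempty ∧ Module.finrank ℝ A.direction = n - 1

/-- A rotation about the affine subspace `L`: an affine isometry fixing `L`
pointwise whose linear part has determinant one (orientation preserving). -/
def IsRotationAbout {n : ℕ} (f : Euc n ≃ᵃⁱ[ℝ] Euc n) (L : AffineSubspace ℝ (Euc n)) : Prop :=
  (∀ x ∈ L, f x = x) ∧
    LinearMap.det (f.linearIsometryEquiv.toLinearEquiv : Euc n →ₗ[ℝ] Euc n) = 1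

/-- A body of revolution with axis the line `L`. -/
def IsRevolutionBody {n : ℕ} (K : Set (Euc n)) (L : AffineSubspace ℝ (Euc n)) : Prop :=
  IsConvexBody K ∧ (L : Set (Euc n)).Nonempty ∧ Module.finrank ℝ L.direction = 1 ∧
    ∀ f : Euc n ≃ᵃⁱ[ℝ] Euc n, IsRotationAbout f L → f '' K = K

/-- A `k`-dimensional ellipsoid: affine image of a `k`-dimensional unit ball. -/
def IsEllipsoidOfDim {n : ℕ} (k : ℕ) (s : Set (Euc n)) : Prop :=
  ∃ (T : Euc n ≃ᵃ[ℝ] Euc n) (V : Submodule ℝ (Euc n)), Module.finrank ℝ V = k ∧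
    s = T '' (closedBall 0 1 ∩ (V : Set (Euc n)))

/-- The shadow boundary of `K` with respect to the direction submodule `D`:
the union of the touching sets of all supporting flats of `K` with direction `D`. -/
def shadowBoundary {n : ℕ} (K : Set (Euc n)) (D : Submodule ℝ (Euc n)) : Set (Euc n) :=
  ⋃ l ∈ {l : AffineSubspace ℝ (Euc n) | l.direction = D ∧
      ((l : Set (Euc n)) ∩ K).Nonempty ∧ (l : Set (Euc n)) ∩ interior K = ∅},
    ((l : Set (Euc n)) ∩ K)

/-- `p` is a Larman point of `K`: every hyperplane section of `K` through `p` has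
an `(n-2)`-plane of symmetry. -/
def IsLarmanPoint {n : ℕ} (K : Set (Euc n)) (p : Euc n) : Prop :=
  p ∈ interior K ∧ ∀ P : AffineSubspace ℝ (Euc n), IsHyperplane P → p ∈ P →
    ∃ L : AffineSubspace ℝ (Euc n), Module.finrank ℝ L.direction = n - 2 ∧
      IsSectionSymmPlane K P L

/-- `p` is a revolution point of `K`: every hyperplane section of `K` through `p` has
an `(n-2)`-plane of symmetry containing `p`. -/
def IsRevolutionPoint {n : ℕ} (K : Set (Euc n)) (p : Euc n) : Prop :=
  p ∈ interior K ∧ ∀ P : AffineSubspace ℝ (Euc n), IsHyperplane P → p ∈ P →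
    ∃ L : AffineSubspace ℝ (Euc n), Module.finrank ℝ L.direction = n - 2 ∧ p ∈ L ∧
      IsSectionSymmPlane K P L


/-!
An extremal argument for the Minkowski asymmetry shows that `K` has a centre, which we take as the
origin. The reflection of `-K = K` turns the false centre `p ≠ 0` into a second one, `-p`. Cut `K`
into parallel chords of a generic direction `u`. The central symmetry of the sections through `±p`
parallel to `u` gives each line through the projection of `p` or `-p` to the shadow of `K` a
reflection under which the chord length is invariant and the height of the chord's midpoint is odd
up to an affine function; this rigidity forces the midpoints of all chords to be coplanar. So `K` is
invariant under a linear reflection in almost every direction `u`. In isotropic position these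
reflections are orthogonal, and a convex body with a dense set of orthogonal reflections is a ball.
-/

namespace FalseCentre

open Filter Topology Module
open scoped RealInnerProductSpace

/-! ### Bodies with a dense set of reflection directions -/

section Ball

variable {E : Type*} [NormedAddCommGroup E] [NormedSpace ℝ E]

lemma exists_pos_smul_mem_of_mem_nhds_zero {s : Set E} (hs : s ∈ 𝓝 (0 : E)) (x : E) :
    ∃ t : ℝ, 0 < t ∧ t • x ∈ s := by
  have hcont : ContinuousAt (fun t : ℝ => t • x) 0 := by fun_prop
  have hmem : ∀ᶠ t in 𝓝[>] (0 : ℝ), t • x ∈ s :=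
    (hcont.eventually_mem (by rwa [zero_smul])).filter_mono nhdsWithin_le_nhds
  obtain ⟨t, ht, ht0⟩ := (hmem.and self_mem_nhdsWithin).exists
  exact ⟨t, ht0, ht⟩

lemma eq_closedBall_of_mem_iff_of_norm_eq [Nontrivial E] {K : Set E} (hK : IsCompact K)
    (hconv : Convex ℝ K) (h0 : K ∈ 𝓝 (0 : E)) (hnorm : ∀ x y : E, ‖x‖ = ‖y‖ → x ∈ K → y ∈ K) :
    ∃ R : ℝ, 0 < R ∧ K = closedBall 0 R := by
  obtain ⟨x, hx, hmax⟩ := hK.exists_isMaxOn ⟨0, mem_of_mem_nhds h0⟩ continuous_norm.continuousOn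
  have hx0 : 0 < ‖x‖ := by
    obtain ⟨v, hv⟩ := exists_ne (0 : E)
    obtain ⟨t, ht, htv⟩ := exists_pos_smul_mem_of_mem_nhds_zero h0 v
    exact (norm_pos_iff.2 (smul_ne_zero ht.ne' hv)).trans_le (hmax htv)
  refine ⟨‖x‖, hx0, Subset.antisymm (fun y hy => mem_closedBall_zero_iff.2 (hmax hy)) ?_⟩
  intro y hy
  rw [mem_closedBall_zero_iff] at hy
  rcases eq_or_ne y 0 with rfl | hy0
  · exact mem_of_mem_nhds h0
  have hy' : 0 < ‖y‖ := norm_pos_iff.2 hy0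
  have hmem : (‖x‖ / ‖y‖) • y ∈ K :=
    hnorm x _ (by rw [norm_smul, Real.norm_of_nonneg (by positivity), div_mul_cancel₀ _ hy'.ne']) hx
  have hscale := hconv.smul_mem_of_zero_mem (mem_of_mem_nhds h0) hmem
    (t := ‖y‖ / ‖x‖) ⟨by positivity, (div_le_one hx0).2 hy⟩
  rwa [smul_smul, div_mul_div_cancel₀ hx0.ne', div_self hy'.ne', one_smul] at hscale

end Ball

/-- A linear reflection in the direction `u`, not necessarily orthogonal, maps `K` to itself. -/
def IsReflectionDirection {E : Type*} [AddCommGroup E] [Module ℝ E] (K : Set E) (u : E) : Prop :=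
  ∃ f : Dual ℝ E, f u = 2 ∧ MapsTo (preReflection u f) K K

lemma IsReflectionDirection.image {E F : Type*} [AddCommGroup E] [Module ℝ E] [AddCommGroup F]
    [Module ℝ F] {K : Set E} {u : E} (h : IsReflectionDirection K u) (e : E ≃ₗ[ℝ] F) :
    IsReflectionDirection (e '' K) (e u) := by
  obtain ⟨f, hfu, hf⟩ := h
  refine ⟨f ∘ₗ e.symm.toLinearMap, by simpa using hfu, ?_⟩
  rintro _ ⟨x, hx, rfl⟩
  exact ⟨_, hf hx, by simp [preReflection_apply]⟩

section InnerProduct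

variable {E : Type*} [NormedAddCommGroup E] [InnerProductSpace ℝ E]

lemma preReflection_eq_of_inner_map_map {u : E} {f : Dual ℝ E} (hfu : f u = 2) (hu : u ≠ 0)
    (hf : ∀ x y, ⟪preReflection u f x, preReflection u f y⟫ = ⟪x, y⟫) (x : E) :
    preReflection u f x = x - (2 * ⟪u, x⟫ / ‖u‖ ^ 2) • u := by
  have hinner := hf u x
  rw [preReflection_apply_self hfu, preReflection_apply, inner_neg_left, inner_sub_right,
    real_inner_smul_right, real_inner_self_eq_norm_sq] at hinner
  have hu2 : ‖u‖ ^ 2 ≠ 0 := by positivity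
  have hfx : f x = 2 * ⟪u, x⟫ / ‖u‖ ^ 2 := by
    rw [eq_div_iff hu2]; linarith
  rw [preReflection_apply, hfx]

/-- The reflection exchanging two vectors of the same norm is a limit of reflections
preserving `K`, so `K` is a union of spheres. -/
lemma eq_closedBall_of_dense_orthogonal_reflections [Nontrivial E] {K : Set E} (hK : IsCompact K)
    (hconv : Convex ℝ K) (h0 : K ∈ 𝓝 (0 : E))
    (hd : Dense {u : E | ∀ x ∈ K, x - (2 * ⟪u, x⟫ / ‖u‖ ^ 2) • u ∈ K}) :
    ∃ R : ℝ, 0 < R ∧ K = closedBall 0 R := by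
  refine eq_closedBall_of_mem_iff_of_norm_eq hK hconv h0 fun x y hxy hx => ?_
  rcases eq_or_ne x y with rfl | hne
  · exact hx
  have hu : ‖x - y‖ ^ 2 ≠ 0 := by simpa [sub_eq_zero] using hne
  have hcont : ContinuousAt (fun u : E => x - (2 * ⟪u, x⟫ / ‖u‖ ^ 2) • u) (x - y) := by
    fun_prop (disch := assumption)
  have hval : x - (2 * ⟪x - y, x⟫ / ‖x - y‖ ^ 2) • (x - y) = y := by
    have hsq : 2 * ⟪x - y, x⟫ = ‖x - y‖ ^ 2 := by
      rw [norm_sub_sq_real, inner_sub_left, real_inner_self_eq_norm_sq, real_inner_comm x y, ← hxy]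
      ring
    rw [hsq, div_self hu, one_smul, sub_sub_cancel]
  have hfreq := (mem_closure_iff_frequently.1 (hd (x - y))).mono fun u hu => hu x hx
  rw [← hval]
  exact hK.isClosed.mem_of_frequently_of_tendsto hfreq hcont

lemma inner_adjoint_adjoint_of_involutive [FiniteDimensional ℝ E] {U : E →ₗ[ℝ] E}
    (hU : Function.Involutive U) (hnorm : ∀ x, ‖U x‖ = ‖x‖) (x y : E) :
    ⟪U.adjoint x, U.adjoint y⟫ = ⟪x, y⟫ := by
  have hinner : ∀ a b, ⟪U a, U b⟫ = ⟪a, b⟫ := fun a b =>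
    (⟨U, hnorm⟩ : E →ₗᵢ[ℝ] E).inner_map_map a b
  have hself : U.adjoint = U := by
    refine (LinearMap.eq_adjoint_iff U U).2 (fun a b => ?_) |>.symm
    rw [← hinner, hU a]
  rw [hself, hinner]

end InnerProduct

lemma exists_linearEquiv_form_self_eq_norm_sq {E : Type*} [NormedAddCommGroup E]
    [InnerProductSpace ℝ E] [FiniteDimensional ℝ E] (Q : QuadraticForm ℝ E) (hQ : Q.PosDef) :
    ∃ T : E ≃ₗ[ℝ] E, ∀ x, Q (T x) = ‖x‖ ^ 2 := by
  obtain ⟨w, hw, ⟨e⟩⟩ := Q.equivalent_one_neg_one_weighted_sum_squared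
    (QuadraticMap.separatingLeft_of_anisotropic Q hQ.anisotropic)
  have hw1 : ∀ i, w i = 1 := fun i => (hw i).resolve_left fun hi => by
    have hpos := hQ (e.symm (Pi.single i 1)) (by simp)
    rw [QuadraticMap.IsometryEquiv.map_app e.symm] at hpos
    simp [QuadraticMap.weightedSumSquares_apply, Pi.single_apply, hi] at hpos
    linarith
  let b := stdOrthonormalBasis ℝ E
  let c : E ≃ₗ[ℝ] (Fin (finrank ℝ E) → ℝ) := b.toBasis.equivFun
  refine ⟨c.trans e.symm.toLinearEquiv, fun x => ?_⟩
  have hx : Q (e.symm (c x)) = ‖x‖ ^ 2 := by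
    rw [QuadraticMap.IsometryEquiv.map_app, QuadraticMap.weightedSumSquares_apply,
      ← b.repr.norm_map, EuclideanSpace.norm_sq_eq]
    refine Finset.sum_congr rfl fun i _ => ?_
    simp [hw1, c, b, sq]
  exact hx

section Moments

variable {E : Type*} [NormedAddCommGroup E] [InnerProductSpace ℝ E] [FiniteDimensional ℝ E]
  [MeasurableSpace E] [BorelSpace E]

/-- The form `(a, b) ↦ ∫ x in K, ⟪x, a⟫ * ⟪x, b⟫` of second moments of `K`; its inverse is the
inertia ellipsoid, which every linear symmetry of `K` preserves. -/
def momentForm (K : Set E) : E →L[ℝ] E →L[ℝ] ℝ :=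
  ∫ x in K, (innerSL ℝ x).smulRight (innerSL ℝ x)

variable {K : Set E}

set_option maxSynthPendingDepth 3 in
lemma momentForm_apply (hK : IsCompact K) (a b : E) :
    momentForm K a b = ∫ x in K, ⟪x, a⟫ * ⟪x, b⟫ := by
  have hcont : Continuous fun x : E =>
      ContinuousLinearMap.smulRightL ℝ E (E →L[ℝ] ℝ) (innerSL ℝ x) (innerSL ℝ x) := by fun_prop
  have hint := hcont.continuousOn.integrableOn_compact (μ := volume) hK
  change (∫ x in K, ContinuousLinearMap.smulRightL ℝ E (E →L[ℝ] ℝ) (innerSL ℝ x) (innerSL ℝ x)) a b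
    = _
  rw [ContinuousLinearMap.integral_apply hint,
    ContinuousLinearMap.integral_apply (hint.apply_continuousLinearMap a)]
  rfl

lemma momentForm_self_pos (hK : IsCompact K) (h0 : K ∈ 𝓝 (0 : E)) {a : E} (ha : a ≠ 0) :
    0 < momentForm K a a := by
  rw [momentForm_apply hK, setIntegral_pos_iff_support_of_nonneg_ae
    (Eventually.of_forall fun x => mul_self_nonneg _)
    ((Continuous.continuousOn (by fun_prop)).integrableOn_compact hK)]
  have hopen : IsOpen ((Function.support fun x : E => ⟪x, a⟫ * ⟪x, a⟫) ∩ interior K) :=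
    (Continuous.isOpen_support (by fun_prop)).inter isOpen_interior
  refine (hopen.measure_pos volume ?_).trans_le
    (measure_mono (inter_subset_inter_right _ interior_subset))
  obtain ⟨t, ht, hta⟩ := exists_pos_smul_mem_of_mem_nhds_zero (interior_mem_nhds.2 h0) a
  exact ⟨t • a, by simp [real_inner_smul_left, ht.ne', ha], hta⟩

lemma momentForm_image (hK : IsCompact K) (e : E ≃ₗ[ℝ] E) (a : E) :
    momentForm (e '' K) a a =
      |LinearMap.det e.toLinearMap| * momentForm K (e.toLinearMap.adjoint a)
        (e.toLinearMap.adjoint a) := by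
  let e' : E ≃L[ℝ] E := e.toContinuousLinearEquiv
  have hchange := integral_image_eq_integral_abs_det_fderiv_smul (μ := (volume : Measure E))
    hK.isClosed.measurableSet (fun x _ => e'.hasFDerivAt.hasFDerivWithinAt) e'.injective.injOn
    (fun x => ⟪x, a⟫ * ⟪x, a⟫)
  have himage : IsCompact (e '' K) := hK.image e'.continuous
  rw [momentForm_apply himage, momentForm_apply hK, ← integral_const_mul]
  simp only [LinearMap.adjoint_inner_right]
  exact hchange

lemma momentForm_adjoint (hK : IsCompact K) {R : E →ₗ[ℝ] E} (hR : Function.Involutive R)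
    (hRK : MapsTo R K K) (a : E) :
    momentForm K (R.adjoint a) (R.adjoint a) = momentForm K a a := by
  have himage : LinearEquiv.ofInvolutive R hR '' K = K :=
    Subset.antisymm (image_subset_iff.2 hRK) fun x hx => ⟨R x, hRK hx, hR x⟩
  have hdet : |LinearMap.det R| = 1 := by
    have hsq : LinearMap.det R * LinearMap.det R = 1 := by
      rw [← map_mul, show R * R = 1 from LinearMap.ext hR, map_one]
    rcases mul_self_eq_one_iff.1 hsq with h | h <;> simp [h]
  have hmoment := momentForm_image hK (LinearEquiv.ofInvolutive R hR) a
  have hcoe : (LinearEquiv.ofInvolutive R hR).toLinearMap = R := rfl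
  rw [himage, hcoe, hdet, one_mul] at hmoment
  exact hmoment.symm

/-- `K` is in isotropic position: its second moment is the same in every direction. -/
def IsIsotropic (K : Set E) : Prop :=
  ∃ c : ℝ, 0 < c ∧ ∀ a, momentForm K a a = c * ‖a‖ ^ 2

lemma exists_isIsotropic_image (hK : IsCompact K) (h0 : K ∈ 𝓝 (0 : E)) :
    ∃ e : E ≃ₗ[ℝ] E, IsIsotropic (e '' K) := by
  obtain ⟨T, hT⟩ := exists_linearEquiv_form_self_eq_norm_sq
    (LinearMap.BilinMap.toQuadraticMap (momentForm K).toLinearMap₁₂)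
    fun _ ha => momentForm_self_pos hK h0 ha
  let e : E ≃ₗ[ℝ] E := LinearEquiv.ofLinearMap T.toLinearMap.adjoint T.symm.toLinearMap.adjoint
    (by simp [← LinearMap.adjoint_comp]) (by simp [← LinearMap.adjoint_comp])
  refine ⟨e, |LinearMap.det e.toLinearMap|, abs_pos.2 (LinearEquiv.isUnit_det' e).ne_zero,
    fun a => ?_⟩
  have hadj : e.toLinearMap.adjoint = T.toLinearMap := LinearMap.adjoint_adjoint _
  rw [momentForm_image hK, hadj, ← hT]
  rfl

lemma IsReflectionDirection.orthogonal_of_isIsotropic {u : E} (hu : IsReflectionDirection K u)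
    (hu0 : u ≠ 0) (hK : IsCompact K) (hiso : IsIsotropic K) :
    ∀ x ∈ K, x - (2 * ⟪u, x⟫ / ‖u‖ ^ 2) • u ∈ K := by
  obtain ⟨f, hfu, hf⟩ := hu
  obtain ⟨c, hc, hcK⟩ := hiso
  have hinv := involutive_preReflection hfu
  have hnorm : ∀ a, ‖(preReflection u f).adjoint a‖ = ‖a‖ := fun a => by
    have hmoment := momentForm_adjoint hK hinv hf a
    rw [hcK, hcK, mul_right_inj' hc.ne', sq_eq_sq₀ (norm_nonneg _) (norm_nonneg _)] at hmoment
    exact hmoment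
  have hadj_inv : Function.Involutive (preReflection u f).adjoint := fun a => by
    have hcomp : preReflection u f ∘ₗ preReflection u f = LinearMap.id := LinearMap.ext hinv
    simpa [LinearMap.adjoint_comp] using LinearMap.congr_fun (congrArg LinearMap.adjoint hcomp) a
  have hinner := inner_adjoint_adjoint_of_involutive hadj_inv hnorm
  rw [LinearMap.adjoint_adjoint] at hinner
  intro x hx
  rw [← preReflection_eq_of_inner_map_map hfu hu0 hinner]
  exact hf hx

/-- After a linear change of coordinates the body is in isotropic position, where every
reflection preserving it is orthogonal. -/
theorem exists_linearEquiv_image_closedBall_of_dense_isReflectionDirection [Nontrivial E]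
    (hK : IsCompact K) (hconv : Convex ℝ K) (h0 : K ∈ 𝓝 (0 : E))
    (hd : Dense {u : E | IsReflectionDirection K u}) :
    ∃ T : E ≃ₗ[ℝ] E, K = T '' closedBall 0 1 := by
  obtain ⟨e, he⟩ := exists_isIsotropic_image hK h0
  let e' : E ≃L[ℝ] E := e.toContinuousLinearEquiv
  have hcomp : IsCompact (e '' K) := hK.image e'.continuous
  have hdense : Dense (e '' {u | IsReflectionDirection K u ∧ u ≠ 0}) :=
    e'.surjective.denseRange.dense_image e'.continuous
      (hd.inter_of_isOpen_right (dense_compl_singleton 0) isOpen_compl_singleton)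
  obtain ⟨R, hR, hball⟩ := eq_closedBall_of_dense_orthogonal_reflections hcomp
    (hconv.linear_image e.toLinearMap)
    (e.map_zero ▸ e'.toHomeomorph.isOpenMap.image_mem_nhds h0)
    (hdense.mono (image_subset_iff.2 fun u hu =>
      (hu.1.image e).orthogonal_of_isIsotropic (e.map_ne_zero_iff.2 hu.2) hcomp he))
  refine ⟨(LinearEquiv.smulOfNeZero ℝ E R hR.ne').trans e.symm, ?_⟩
  have hscale : (fun x => R • x) '' closedBall (0 : E) 1 = closedBall 0 R := by
    rw [image_smul, smul_unitClosedBall, Real.norm_of_nonneg hR.le]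
  calc K = e.symm '' (e '' K) := (e.symm_image_image K).symm
    _ = e.symm '' ((fun x => R • x) '' closedBall 0 1) := by rw [hscale, hball]
    _ = _ := image_image _ _ _

end Moments

/-! ### Existence of a centre -/

/-- Every plane section of `K` through `p` is centrally symmetric. The centre of the section by
`p + S` is `p + c / 2`. -/
def HasSymmetricSections {E : Type*} [AddCommGroup E] [Module ℝ E] (K : Set E) (p : E) : Prop :=
  ∀ S : Submodule ℝ E, finrank ℝ S = 2 → ∃ c ∈ S, ∀ x ∈ S, p + x ∈ K → p + (c - x) ∈ K

/-- `-K ⊆ l K` for some `l > 1`, and `φ ≤ 1` on `K`. When `φ` attains the value `-l` on `K`, the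
number `l` is the Minkowski asymmetry of `K` about the origin. -/
structure IsAsymmetrySupport {E : Type*} [AddCommGroup E] [Module ℝ E] (K : Set E) (φ : Dual ℝ E)
    (l : ℝ) : Prop where
  one_lt : 1 < l
  le_one : ∀ x ∈ K, φ x ≤ 1
  neg_inv_smul_mem : ∀ x ∈ K, -(l⁻¹ • x) ∈ K

/-- The face of `K` on which the functional `φ` of an `IsAsymmetrySupport` is minimal. -/
def minFace {E : Type*} [AddCommGroup E] [Module ℝ E] (K : Set E) (φ : Dual ℝ E) (l : ℝ) : Set E :=
  {x ∈ K | φ x = -l}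

/-- The image under `x ↦ -l x` of the face of `K` on which the functional `φ` of an
`IsAsymmetrySupport` is maximal. -/
def dilatedMaxFace {E : Type*} [AddCommGroup E] [Module ℝ E] (K : Set E) (φ : Dual ℝ E) (l : ℝ) :
    Set E :=
  {x | -(l⁻¹ • x) ∈ K ∧ φ x = -l}

lemma linearIndependent_pair_of_apply_eq {E : Type*} [AddCommGroup E] [Module ℝ E] {φ : Dual ℝ E}
    {x y : E} (hφ : φ x ≠ 0) (hxy : φ y = φ x) (hne : x ≠ y) : LinearIndependent ℝ ![x, y] := by
  refine LinearIndependent.pair_iff.2 fun s t hst => ?_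
  have hsum : (s + t) * φ x = 0 := by
    simpa [hxy, ← add_mul] using congrArg φ hst
  obtain rfl : s = -t := by linarith [(mul_eq_zero.1 hsum).resolve_right hφ]
  have hzero : t • (y - x) = 0 := by rw [← hst]; module
  have ht : t = 0 := (smul_eq_zero.1 hzero).resolve_right (sub_ne_zero.2 hne.symm)
  simp [ht]

lemma exists_eq_lineMap_of_mem_span_pair {E : Type*} [AddCommGroup E] [Module ℝ E] {φ : Dual ℝ E}
    {x y z : E} (hφ : φ x ≠ 0) (hxy : φ y = φ x) (hz : z ∈ Submodule.span ℝ {x, y})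
    (hxz : φ z = φ x) : ∃ t : ℝ, z = x + t • (y - x) := by
  obtain ⟨s, t, rfl⟩ := Submodule.mem_span_pair.1 hz
  have hsum : (s + t) * φ x = 1 * φ x := by
    simpa [hxy, ← add_mul] using hxz
  obtain rfl : s = 1 - t := by linarith [mul_right_cancel₀ hφ hsum]
  exact ⟨t, by module⟩

lemma finrank_span_pair_of_linearIndependent {E : Type*} [AddCommGroup E] [Module ℝ E] {x y : E}
    (h : LinearIndependent ℝ ![x, y]) : finrank ℝ (Submodule.span ℝ {x, y}) = 2 := by
  have hcard := finrank_span_eq_card h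
  rwa [Matrix.range_cons, Matrix.range_cons, Matrix.range_empty, union_empty, singleton_union,
    Fintype.card_fin] at hcard

namespace IsAsymmetrySupport

section Module

variable {E : Type*} [AddCommGroup E] [Module ℝ E] {K : Set E} {φ : Dual ℝ E} {l : ℝ}

lemma neg_le_apply (h : IsAsymmetrySupport K φ l) {x : E} (hx : x ∈ K) : -l ≤ φ x := by
  have hl := h.one_lt
  have hφ := h.le_one _ (h.neg_inv_smul_mem x hx)
  rw [map_neg, map_smul, smul_eq_mul, neg_le, inv_mul_eq_div, le_div_iff₀ (by linarith)] at hφ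
  linarith

lemma minFace_subset (h : IsAsymmetrySupport K φ l) : minFace K φ l ⊆ dilatedMaxFace K φ l :=
  fun x hx => ⟨h.neg_inv_smul_mem x hx.1, hx.2⟩

lemma apply_centre (h : IsAsymmetrySupport K φ l) {S : Submodule ℝ E} {c y : E}
    (hc : ∀ x ∈ S, x ∈ K → c - x ∈ K) (hy : y ∈ minFace K φ l) (hyS : y ∈ S) : φ c = 1 - l := by
  have hl : l ≠ 0 := by linarith [h.one_lt]
  have hupper := h.le_one _ (hc y hyS hy.1)
  have hlower := h.neg_le_apply (hc _ (S.neg_mem (S.smul_mem _ hyS)) (h.neg_inv_smul_mem y hy.1))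
  rw [map_sub, hy.2] at hupper
  rw [sub_neg_eq_add, map_add, map_smul, hy.2, smul_eq_mul, mul_neg, inv_mul_cancel₀ hl] at hlower
  linarith

lemma centre_add_mem_minFace (h : IsAsymmetrySupport K φ l) {S : Submodule ℝ E} {c y m : E}
    (hc : ∀ x ∈ S, x ∈ K → c - x ∈ K) (hy : y ∈ minFace K φ l) (hyS : y ∈ S)
    (hm : m ∈ dilatedMaxFace K φ l) (hmS : m ∈ S) : c + l⁻¹ • m ∈ minFace K φ l := by
  have hl : l ≠ 0 := by linarith [h.one_lt]
  refine ⟨by simpa using hc _ (S.neg_mem (S.smul_mem _ hmS)) hm.1, ?_⟩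
  rw [map_add, map_smul, h.apply_centre hc hy hyS, hm.2, smul_eq_mul]
  field_simp
  ring

lemma smul_sub_centre_mem_dilatedMaxFace (h : IsAsymmetrySupport K φ l) {S : Submodule ℝ E}
    {c y : E} (hc : ∀ x ∈ S, x ∈ K → c - x ∈ K) (hy : y ∈ minFace K φ l) (hyS : y ∈ S) :
    l • (y - c) ∈ dilatedMaxFace K φ l := by
  have hl : l ≠ 0 := by linarith [h.one_lt]
  refine ⟨by simpa [smul_smul, hl] using hc y hyS hy.1, ?_⟩
  rw [map_smul, map_sub, h.apply_centre hc hy hyS, hy.2, smul_eq_mul]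
  ring

lemma centre_eq (h : IsAsymmetrySupport K φ l) {S : Submodule ℝ E} {c y : E}
    (hc : ∀ x ∈ S, x ∈ K → c - x ∈ K) (hy : y ∈ minFace K φ l) (hyS : y ∈ S) (hcS : c ∈ S)
    (huniq : ∀ z ∈ minFace K φ l, z ∈ S → z = y) : c = (1 - l⁻¹) • y := by
  have hmem := h.centre_add_mem_minFace hc hy hyS (h.minFace_subset hy) hyS
  rw [sub_smul, one_smul, eq_sub_iff_add_eq]
  exact huniq _ hmem (S.add_mem hcS (S.smul_mem _ hyS))

lemma eq_of_mem_dilatedMaxFace (h : IsAsymmetrySupport K φ l) (hsec : HasSymmetricSections K 0)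
    {y m : E} (hy : y ∈ minFace K φ l) (hm : m ∈ dilatedMaxFace K φ l)
    (huniq : ∀ t : ℝ, y + t • (m - y) ∈ minFace K φ l → y + t • (m - y) = y) : m = y := by
  by_contra! hne
  have hl : l ≠ 0 := by linarith [h.one_lt]
  have hφ : φ y ≠ 0 := by simpa [hy.2] using hl
  have hmy : φ m = φ y := hm.2.trans hy.2.symm
  have hyS : y ∈ Submodule.span ℝ {y, m} := Submodule.subset_span (by simp)
  have hmS : m ∈ Submodule.span ℝ {y, m} := Submodule.subset_span (by simp)
  obtain ⟨c, hcS, hc⟩ := hsec _ (finrank_span_pair_of_linearIndependent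
    (linearIndependent_pair_of_apply_eq hφ hmy hne.symm))
  simp only [zero_add] at hc
  have huniq' : ∀ z ∈ minFace K φ l, z ∈ Submodule.span ℝ {y, m} → z = y := fun z hz hzS => by
    obtain ⟨t, rfl⟩ := exists_eq_lineMap_of_mem_span_pair hφ hmy hzS (hz.2.trans hy.2.symm)
    exact huniq t hz
  have hcm := huniq' _ (h.centre_add_mem_minFace hc hy hyS hm hmS)
    (Submodule.add_mem _ hcS (Submodule.smul_mem _ _ hmS))
  have hcy := huniq' _ (h.centre_add_mem_minFace hc hy hyS (h.minFace_subset hy) hyS)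
    (Submodule.add_mem _ hcS (Submodule.smul_mem _ _ hyS))
  exact hne (smul_right_injective E (inv_ne_zero hl) (add_left_cancel (hcm.trans hcy.symm)))

/-- The dilated face is `l > 1` times as long as the chord of the face it contains. -/
lemma exists_extension_mem_dilatedMaxFace (h : IsAsymmetrySupport K φ l)
    (hsec : HasSymmetricSections K 0) {x y : E} (hx : x ∈ minFace K φ l) (hy : y ∈ minFace K φ l)
    (hne : x ≠ y) :
    ∃ t : ℝ, 0 < t ∧ (y + t • (y - x) ∈ dilatedMaxFace K φ l ∨
      x + t • (x - y) ∈ dilatedMaxFace K φ l) := by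
  have hl := h.one_lt
  have hφ : φ x ≠ 0 := by rw [hx.2]; linarith
  have hxy : φ y = φ x := hy.2.trans hx.2.symm
  have hxS : x ∈ Submodule.span ℝ {x, y} := Submodule.subset_span (by simp)
  have hyS : y ∈ Submodule.span ℝ {x, y} := Submodule.subset_span (by simp)
  obtain ⟨c, hcS, hc⟩ := hsec _ (finrank_span_pair_of_linearIndependent
    (linearIndependent_pair_of_apply_eq hφ hxy hne))
  simp only [zero_add] at hc
  have hxc := h.smul_sub_centre_mem_dilatedMaxFace hc hx hxS
  have hyc := h.smul_sub_centre_mem_dilatedMaxFace hc hy hyS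
  obtain ⟨a, ha⟩ := exists_eq_lineMap_of_mem_span_pair hφ hxy
    (Submodule.smul_mem _ l (Submodule.sub_mem _ hxS hcS)) (hxc.2.trans hx.2.symm)
  rcases lt_or_ge a 0 with ha0 | ha0
  · refine ⟨-a, by linarith, Or.inr ?_⟩
    convert hxc using 1
    rw [ha]; module
  · refine ⟨a + l - 1, by linarith, Or.inl ?_⟩
    convert hyc using 1
    calc y + (a + l - 1) • (y - x) = (x + a • (y - x)) + l • (y - x) := by module
      _ = l • (y - c) := by rw [← ha]; module

/-- The plane through `0`, `x` and `z` meets the face only at `x`, which determines its centre. -/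
lemma centre_sub_mem (h : IsAsymmetrySupport K φ l) (hsec : HasSymmetricSections K 0) {x y z : E}
    (hx : x ∈ minFace K φ l) (hline : ∀ w ∈ minFace K φ l, ∃ t : ℝ, w = x + t • (y - x))
    (hz : z ∈ K) (hzxy : z ∉ Submodule.span ℝ {x, y}) : (1 - l⁻¹) • x - z ∈ K := by
  have hφ : φ x ≠ 0 := by rw [hx.2]; linarith [h.one_lt]
  have hx0 : x ≠ 0 := by rintro rfl; simp at hφ
  have hxspan : x ∈ Submodule.span ℝ {x, y} := Submodule.subset_span (by simp)
  have hyspan : y ∈ Submodule.span ℝ {x, y} := Submodule.subset_span (by simp)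
  have hindep : LinearIndependent ℝ ![x, z] := by
    refine (LinearIndependent.pair_iff' hx0).2 fun a ha => hzxy ?_
    exact ha ▸ Submodule.smul_mem _ a hxspan
  obtain ⟨c, hcS, hc⟩ := hsec _ (finrank_span_pair_of_linearIndependent hindep)
  simp only [zero_add] at hc
  have huniq : ∀ w ∈ minFace K φ l, w ∈ Submodule.span ℝ {x, z} → w = x := fun w hw hwS => by
    obtain ⟨a, b, rfl⟩ := Submodule.mem_span_pair.1 hwS
    obtain ⟨t, ht⟩ := hline _ hw
    have hbz : b • z ∈ Submodule.span ℝ {x, y} := by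
      rw [eq_sub_of_add_eq' ht]
      exact Submodule.sub_mem _ (Submodule.add_mem _ hxspan
        (Submodule.smul_mem _ t (Submodule.sub_mem _ hyspan hxspan)))
        (Submodule.smul_mem _ a hxspan)
    obtain rfl : b = 0 := by
      by_contra hb
      exact hzxy ((Submodule.smul_mem_iff _ hb).1 hbz)
    have ha : a * φ x = 1 * φ x := by simpa [hx.2] using hw.2
    simp [mul_right_cancel₀ hφ ha]
  rw [← h.centre_eq hc hx (Submodule.subset_span (by simp)) hcS huniq]
  exact hc z (Submodule.subset_span (by simp)) hz

end Module

section InnerProduct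

variable {E : Type*} [NormedAddCommGroup E] [InnerProductSpace ℝ E] {K : Set E} {φ : Dual ℝ E}
  {l : ℝ}

lemma eq_of_inner_eq_zero_of_dist_le {x y z : E} (hz : dist z x ≤ dist y x)
    (horth : ⟪z - y, y - x⟫ = 0) : z = y := by
  have hpyth : ‖z - x‖ * ‖z - x‖ = ‖z - y‖ * ‖z - y‖ + ‖y - x‖ * ‖y - x‖ := by
    rw [← norm_add_sq_eq_norm_sq_add_norm_sq_real horth, sub_add_sub_cancel]
  rw [dist_eq_norm, dist_eq_norm] at hz
  have hzero : ‖z - y‖ * ‖z - y‖ ≤ 0 := by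
    nlinarith [norm_nonneg (z - x), norm_nonneg (y - x)]
  exact sub_eq_zero.1 (norm_eq_zero.1 (mul_self_eq_zero.1 (le_antisymm hzero (mul_self_nonneg _))))

lemma convex_dilatedMaxFace (hK : Convex ℝ K) : Convex ℝ (dilatedMaxFace K φ l) := by
  have hpre := (hK.linear_preimage (-(l⁻¹ • LinearMap.id : E →ₗ[ℝ] E)))
  exact hpre.inter (convex_hyperplane φ.isLinear (-l))

/-- The hyperplane through `y` orthogonal to the diametral chord `[x, y]` meets the dilated face
only at `y`, whereas that face contains points on both sides of it. -/
lemma exists_eq_lineMap_of_diametral (h : IsAsymmetrySupport K φ l) (hK : Convex ℝ K)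
    (hsec : HasSymmetricSections K 0) {x y : E} (hy : y ∈ minFace K φ l)
    (hdiam : ∀ z ∈ minFace K φ l, dist z x ≤ dist y x) (hne : x ≠ y) {s : ℝ} (hs : 0 < s)
    (hext : y + s • (y - x) ∈ dilatedMaxFace K φ l) {z : E} (hz : z ∈ minFace K φ l) :
    ∃ t : ℝ, z = x + t • (y - x) := by
  have horth : ∀ m ∈ dilatedMaxFace K φ l, ⟪m - y, y - x⟫ = 0 → m = y := fun m hm hinner =>
    h.eq_of_mem_dilatedMaxFace hsec hy hm fun t ht =>
      eq_of_inner_eq_zero_of_dist_le (hdiam _ ht)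
        (by rw [add_sub_cancel_left, real_inner_smul_left, hinner, mul_zero])
  have hyx : 0 < ‖y - x‖ ^ 2 := by
    have : 0 < ‖y - x‖ := norm_pos_iff.2 (sub_ne_zero.2 hne.symm)
    positivity
  have hzside : ⟪z - y, y - x⟫ ≤ 0 := by
    have hpolar : ‖z - x‖ ^ 2 = ‖z - y‖ ^ 2 + 2 * ⟪z - y, y - x⟫ + ‖y - x‖ ^ 2 := by
      rw [← norm_add_sq_real, sub_add_sub_cancel]
    have hdist := hdiam z hz
    rw [dist_eq_norm, dist_eq_norm] at hdist
    nlinarith [sq_le_sq₀ (norm_nonneg _) (norm_nonneg _) |>.2 hdist, sq_nonneg ‖z - y‖]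
  set a := ⟪z - y, y - x⟫
  set b := s * ‖y - x‖ ^ 2 with hb_def
  have hb : 0 < b := mul_pos hs hyx
  have hba : 0 < b - a := by linarith
  have hcross : (b / (b - a)) • z + (-a / (b - a)) • (y + s • (y - x)) = y := by
    refine horth _ (convex_dilatedMaxFace hK (h.minFace_subset hz) hext (by positivity)
      (div_nonneg (by linarith) hba.le) (by field_simp; ring)) ?_
    have hsplit : (b / (b - a)) • z + (-a / (b - a)) • (y + s • (y - x)) - y =
        (b / (b - a)) • (z - y) + (-a / (b - a) * s) • (y - x) := by
      match_scalars <;> field_simp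
      ring
    rw [hsplit, inner_add_left, real_inner_smul_left, real_inner_smul_left,
      real_inner_self_eq_norm_sq, mul_assoc, ← hb_def]
    ring
  refine ⟨1 + a * s / b, ?_⟩
  calc z = ((b - a) / b) • ((b / (b - a)) • z + (-a / (b - a)) • (y + s • (y - x))) +
        (a / b) • (y + s • (y - x)) := by match_scalars <;> field_simp <;> ring
    _ = x + (1 + a * s / b) • (y - x) := by
      rw [hcross]
      match_scalars <;> field_simp <;> ring

lemma exists_minFace_subset_line [FiniteDimensional ℝ E] (h : IsAsymmetrySupport K φ l)
    (hK : IsCompact K) (hconv : Convex ℝ K) (hsec : HasSymmetricSections K 0)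
    (hne : (minFace K φ l).Nonempty) :
    ∃ x ∈ minFace K φ l, ∃ y, ∀ z ∈ minFace K φ l, ∃ t : ℝ, z = x + t • (y - x) := by
  have hφ : Continuous φ := φ.continuous_of_finiteDimensional
  have hF : IsCompact (minFace K φ l) := hK.inter_right (isClosed_eq hφ continuous_const)
  obtain ⟨⟨x, y⟩, ⟨hx, hy⟩, hmax⟩ := (hF.prod hF).exists_isMaxOn (hne.prod hne)
    (f := fun w => dist w.2 w.1) (by fun_prop)
  have hmax' : ∀ z ∈ minFace K φ l, ∀ w ∈ minFace K φ l, dist w z ≤ dist y x :=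
    fun z hz w hw => hmax (mk_mem_prod hz hw)
  refine ⟨x, hx, y, fun z hz => ?_⟩
  rcases eq_or_ne x y with rfl | hxy
  · have hzx : z = x := dist_le_zero.1 ((hmax' x hx z hz).trans_eq (dist_self x))
    exact ⟨0, by simp [hzx]⟩
  obtain ⟨s, hs, hext | hext⟩ := h.exists_extension_mem_dilatedMaxFace hsec hx hy hxy
  · exact h.exists_eq_lineMap_of_diametral hconv hsec hy (hmax' x hx) hxy hs hext hz
  · obtain ⟨t, rfl⟩ := h.exists_eq_lineMap_of_diametral hconv hsec hx
      (fun w hw => (hmax' y hy w hw).trans_eq (dist_comm y x)) hxy.symm hs hext hz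
    exact ⟨1 - t, by module⟩

end InnerProduct

end IsAsymmetrySupport

lemma dense_compl_span_pair {E : Type*} [NormedAddCommGroup E] [NormedSpace ℝ E]
    (hE : 3 ≤ finrank ℝ E) (x y : E) : Dense (Submodule.span ℝ {x, y} : Set E)ᶜ := by
  refine interior_eq_empty_iff_dense_compl.1 (not_nonempty_iff_eq_empty.1 fun hne => ?_)
  classical
  have hrank : finrank ℝ (Submodule.span ℝ {x, y}) ≤ 2 := by
    rw [← Finset.coe_pair]
    exact (finrank_span_finset_le_card {x, y}).trans Finset.card_le_two
  rw [Submodule.eq_top_of_nonempty_interior' _ hne, finrank_top] at hrank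
  omega

lemma subset_of_interior_inter_dense_subset {E : Type*} [AddCommGroup E] [Module ℝ E]
    [TopologicalSpace E] [IsTopologicalAddGroup E] [ContinuousSMul ℝ E] {K D A : Set E}
    (hK : Convex ℝ K) (hne : (interior K).Nonempty) (hD : Dense D) (hA : IsClosed A)
    (h : interior K ∩ D ⊆ A) : K ⊆ A :=
  calc K ⊆ closure K := subset_closure
    _ = closure (interior K) := (hK.closure_interior_eq_closure_of_nonempty_interior hne).symm
    _ ⊆ A := closure_minimal
      ((hD.open_subset_closure_inter isOpen_interior).trans (closure_minimal h hA)) hA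

lemma IsAsymmetrySupport.exists_centre {E : Type*} [NormedAddCommGroup E] [InnerProductSpace ℝ E]
    [FiniteDimensional ℝ E] {K : Set E} {φ : Dual ℝ E} {l : ℝ} (h : IsAsymmetrySupport K φ l)
    (hE : 3 ≤ finrank ℝ E) (hK : IsCompact K) (hconv : Convex ℝ K) (hint : (interior K).Nonempty)
    (hsec : HasSymmetricSections K 0) (hne : (minFace K φ l).Nonempty) :
    ∃ c ≠ 0, ∀ x ∈ K, c - x ∈ K := by
  obtain ⟨x, hx, y, hline⟩ := h.exists_minFace_subset_line hK hconv hsec hne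
  have hx0 : x ≠ 0 := by
    rintro rfl
    linarith [h.one_lt, hx.2.symm.trans (map_zero φ)]
  have hl : 1 - l⁻¹ ≠ 0 := (sub_pos.2 (inv_lt_one_of_one_lt₀ h.one_lt)).ne'
  exact ⟨(1 - l⁻¹) • x, smul_ne_zero hl hx0, subset_of_interior_inter_dense_subset hconv hint
    (dense_compl_span_pair hE x y) (hK.isClosed.preimage (continuous_const.sub continuous_id))
    fun z hz => h.centre_sub_mem hsec hx hline (interior_subset hz.1) hz.2⟩

section Existence

variable {E : Type*} [NormedAddCommGroup E] [NormedSpace ℝ E] {K : Set E}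

lemma gauge_le_one_iff_mem_of_isClosed (hconv : Convex ℝ K) (hK : IsClosed K)
    (h0 : K ∈ 𝓝 (0 : E)) {x : E} : gauge K x ≤ 1 ↔ x ∈ K := by
  rw [gauge_le_one_iff_mem_closure hconv h0, hK.closure_eq]

lemma exists_dual_le_one_of_notMem_interior (hconv : Convex ℝ K) (h0 : (0 : E) ∈ interior K)
    {x : E} (hx : x ∉ interior K) : ∃ φ : Dual ℝ E, φ x = 1 ∧ ∀ z ∈ K, φ z ≤ 1 := by
  obtain ⟨f, hf⟩ := geometric_hahn_banach_open_point hconv.interior isOpen_interior hx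
  have hfx : 0 < f x := by simpa only [map_zero] using hf 0 h0
  have hfK : K ⊆ {z | f z ≤ f x} :=
    subset_of_interior_inter_dense_subset hconv ⟨0, h0⟩ dense_univ
      (isClosed_le f.continuous continuous_const) fun z hz => (hf z hz.1).le
  refine ⟨((f x)⁻¹ • f : E →L[ℝ] ℝ), ?_, fun z hz => ?_⟩
  · exact inv_mul_cancel₀ hfx.ne'
  · exact (inv_mul_le_one₀ hfx).2 (hfK hz)

lemma exists_isAsymmetrySupport (hK : IsCompact K) (hconv : Convex ℝ K)
    (h0 : (0 : E) ∈ interior K) (hns : ¬∀ x ∈ K, -x ∈ K) :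
    ∃ (φ : Dual ℝ E) (l : ℝ), IsAsymmetrySupport K φ l ∧ (minFace K φ l).Nonempty := by
  have hnhds := mem_interior_iff_mem_nhds.1 h0
  have hgauge : ∀ x, gauge K x ≤ 1 ↔ x ∈ K := fun x =>
    gauge_le_one_iff_mem_of_isClosed hconv hK.isClosed hnhds
  have hcont : Continuous (gauge K) := continuous_gauge hconv hnhds
  obtain ⟨y, hy, hmax⟩ := hK.exists_isMaxOn ⟨0, interior_subset h0⟩
    (f := fun x => gauge K (-x)) (hcont.comp continuous_neg).continuousOn
  set l := gauge K (-y) with hl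
  have hone : 1 < l := by
    by_contra! hle
    exact hns fun x hx => (hgauge _).1 ((hmax hx).trans hle)
  have hpos : 0 < l := one_pos.trans hone
  have hscale : ∀ x, gauge K (-(l⁻¹ • x)) = l⁻¹ * gauge K (-x) := fun x => by
    rw [← smul_neg, gauge_smul_of_nonneg (inv_nonneg.2 hpos.le), smul_eq_mul]
  have hx : -(l⁻¹ • y) ∉ interior K := by
    rw [← gauge_lt_one_iff_mem_interior hconv hnhds, hscale, ← hl, inv_mul_cancel₀ hpos.ne']
    exact lt_irrefl 1
  obtain ⟨φ, hφy, hφ⟩ := exists_dual_le_one_of_notMem_interior hconv h0 hx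
  refine ⟨φ, l, ⟨hone, hφ, fun x hx => ?_⟩, y, hy, ?_⟩
  · rw [← hgauge, hscale]
    exact (inv_mul_le_one₀ hpos).2 (hmax hx)
  · rw [map_neg, map_smul, smul_eq_mul] at hφy
    field_simp at hφy
    linarith

end Existence

theorem exists_centre_of_hasSymmetricSections {E : Type*} [NormedAddCommGroup E]
    [InnerProductSpace ℝ E] [FiniteDimensional ℝ E] (hE : 3 ≤ finrank ℝ E) {K : Set E}
    (hK : IsCompact K) (hconv : Convex ℝ K) (h0 : (0 : E) ∈ interior K)
    (hsec : HasSymmetricSections K 0) (hns : ¬∀ x ∈ K, -x ∈ K) :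
    ∃ c ≠ 0, ∀ x ∈ K, c - x ∈ K := by
  obtain ⟨φ, l, hφ, hne⟩ := exists_isAsymmetrySupport hK hconv h0 hns
  exact hφ.exists_centre hE hK hconv ⟨0, h0⟩ hsec hne

/-! ### Symmetric bodies -/

/-- A centrally symmetric convex body, centred at the origin. -/
structure IsSymmetricBody {V : Type*} [NormedAddCommGroup V] [NormedSpace ℝ V] (K : Set V) :
    Prop where
  isCompact : IsCompact K
  convex : Convex ℝ K
  neg_mem : ∀ x ∈ K, -x ∈ K
  zero_mem_interior : 0 ∈ interior K

lemma neg_mem_interior_of_forall_neg_mem {V : Type*} [TopologicalSpace V] [AddGroup V]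
    [ContinuousNeg V] {K : Set V} (hneg : ∀ x ∈ K, -x ∈ K) {x : V} (hx : x ∈ interior K) :
    -x ∈ interior K := by
  have hpre : Homeomorph.neg V ⁻¹' K = K :=
    Subset.antisymm (fun y hy => neg_neg y ▸ hneg _ hy) hneg
  rw [← hpre, ← (Homeomorph.neg V).preimage_interior] at hx
  exact hx

namespace IsSymmetricBody

variable {V : Type*} [NormedAddCommGroup V] [NormedSpace ℝ V] {K : Set V}

lemma mem_nhds_zero (h : IsSymmetricBody K) : K ∈ 𝓝 0 :=
  mem_interior_iff_mem_nhds.1 h.zero_mem_interior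

lemma zero_mem (h : IsSymmetricBody K) : 0 ∈ K := interior_subset h.zero_mem_interior

lemma neg_mem_interior (h : IsSymmetricBody K) {x : V} (hx : x ∈ interior K) :
    -x ∈ interior K := neg_mem_interior_of_forall_neg_mem h.neg_mem hx

lemma smul_mem_interior (h : IsSymmetricBody K) {x : V} (hx : x ∈ K) {t : ℝ}
    (ht : t ∈ Ico (0 : ℝ) 1) : t • x ∈ interior K := by
  simpa using h.convex.combo_interior_self_mem_interior h.zero_mem_interior hx
    (sub_pos.2 ht.2) ht.1 (sub_add_cancel 1 t)

end IsSymmetricBody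

lemma lt_apply_of_mem_openSegment {V : Type*} [AddCommGroup V] [Module ℝ V] {s : Set V}
    {g : V → ℝ} (hg : ConcaveOn ℝ s g) {x y z : V} {l : ℝ} (hx : x ∈ s) (hy : y ∈ s)
    (hz : z ∈ openSegment ℝ x y) (hlx : l ≤ g x) (hly : l < g y) : l < g z := by
  obtain ⟨a, b, ha, hb, hab, rfl⟩ := hz
  calc l = a * l + b * l := by rw [← add_mul, hab, one_mul]
    _ < a * g x + b * g y := by nlinarith
    _ ≤ g (a • x + b • y) := hg.2 hx hy ha.le hb.le hab

lemma lt_apply_of_mem_Ioo {s : Set ℝ} {g : ℝ → ℝ} (hg : ConcaveOn ℝ s g) {a b x t l : ℝ}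
    (ha : a ∈ s) (hb : b ∈ s) (hx : x ∈ s) (ht : t ∈ Ioo a b) (hla : l ≤ g a) (hlb : l ≤ g b)
    (hlx : l < g x) : l < g t := by
  rcases lt_trichotomy t x with htx | rfl | htx
  · exact lt_apply_of_mem_openSegment hg ha hx
      (by rw [openSegment_eq_Ioo (ht.1.trans htx)]; exact ⟨ht.1, htx⟩) hla hlx
  · exact hlx
  · exact lt_apply_of_mem_openSegment hg hb hx
      (by rw [openSegment_symm, openSegment_eq_Ioo (htx.trans ht.2)]; exact ⟨htx, ht.2⟩) hlb hlx

/-! ### The planar argument -/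

/-- The length of the chord `[-f (-y), f y]`. -/
def chord {V : Type*} [Neg V] (f : V → ℝ) (y : V) : ℝ := f y + f (-y)

/-- Twice the height of the midpoint of the chord `[-f (-y), f y]`. -/
def shift {V : Type*} [Neg V] (f : V → ℝ) (y : V) : ℝ := f y - f (-y)

/-- The false centre in the planar argument, normalised to be `(1, 0)`. -/
def pole : ℝ × ℝ := (1, 0)

/-- What remains of a symmetric body in `ℝ² × ℝ`, with upper boundary the graph of `f` over `P` and
centrally symmetric sections by the vertical planes through `pole`, once its vertical chords are
sheared so that `shift f` is critical at `pole`. The centre of the section over the line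
`pole + ℝ v` induces the symmetry `t ↦ β - t` of that line. -/
structure FalseCentreProfile (P : Set (ℝ × ℝ)) (f : ℝ × ℝ → ℝ) : Prop where
  isSymmetricBody : IsSymmetricBody P
  pole_mem_interior : pole ∈ interior P
  concaveOn : ConcaveOn ℝ P f
  isClosed_superlevel : ∀ l, IsClosed {y ∈ P | l ≤ chord f y}
  chord_pos : ∀ y ∈ interior P, 0 < chord f y
  chord_nonpos : ∀ y ∈ P, y ∉ interior P → y.2 = 0 → chord f y ≤ 0
  exists_reflection : ∀ v : ℝ × ℝ, v.2 ≠ 0 → ∃ β κ : ℝ, ∀ t : ℝ, pole + t • v ∈ P →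
    pole + (β - t) • v ∈ P ∧ f (pole + t • v) - f (-(pole + (β - t) • v)) = κ
  hasFDerivAt_shift : HasFDerivAt (shift f) (0 : ℝ × ℝ →L[ℝ] ℝ) pole

/-- The symmetry `t ↦ β - t` of the line `pole + ℝ v` preserves the chord lengths over it and
reverses their shifts, up to a constant. -/
structure IsChordReflection (P : Set (ℝ × ℝ)) (f : ℝ × ℝ → ℝ) (v : ℝ × ℝ) (β : ℝ) : Prop where
  mem : ∀ t : ℝ, pole + t • v ∈ P → pole + (β - t) • v ∈ P
  chord_eq : ∀ t : ℝ, pole + t • v ∈ P → chord f (pole + (β - t) • v) = chord f (pole + t • v)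
  shift_add : ∀ t : ℝ, pole + t • v ∈ P →
    shift f (pole + t • v) + shift f (pole + (β - t) • v) = shift f pole + shift f (pole + β • v)

section Neg

variable {V : Type*} [AddGroup V] (f : V → ℝ) (y : V)

@[simp] lemma chord_neg : chord f (-y) = chord f y := by simp [chord, add_comm]

@[simp] lemma shift_neg : shift f (-y) = -shift f y := by simp [shift]

end Neg

namespace IsSymmetricBody

variable {V : Type*} [NormedAddCommGroup V] [NormedSpace ℝ V] {P : Set V} {f : V → ℝ}

lemma concaveOn_comp_neg (h : IsSymmetricBody P) (hf : ConcaveOn ℝ P f) :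
    ConcaveOn ℝ P fun y => f (-y) :=
  (hf.comp_linearMap (-LinearMap.id)).subset h.neg_mem h.convex

lemma concaveOn_chord (h : IsSymmetricBody P) (hf : ConcaveOn ℝ P f) : ConcaveOn ℝ P (chord f) :=
  hf.add (h.concaveOn_comp_neg hf)

end IsSymmetricBody

namespace FalseCentreProfile

variable {P : Set (ℝ × ℝ)} {f : ℝ × ℝ → ℝ}

lemma pole_mem (h : FalseCentreProfile P f) : pole ∈ P := interior_subset h.pole_mem_interior

lemma convex (h : FalseCentreProfile P f) : Convex ℝ P := h.isSymmetricBody.convex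

lemma neg_mem (h : FalseCentreProfile P f) {y : ℝ × ℝ} (hy : y ∈ P) : -y ∈ P :=
  h.isSymmetricBody.neg_mem y hy

lemma concaveOn_chord (h : FalseCentreProfile P f) : ConcaveOn ℝ P (chord f) :=
  h.isSymmetricBody.concaveOn_chord h.concaveOn

lemma concaveOn_chord_line (h : FalseCentreProfile P f) (v : ℝ × ℝ) :
    ConcaveOn ℝ {t : ℝ | pole + t • v ∈ P} fun t => chord f (pole + t • v) := by
  have hline := h.concaveOn_chord.comp_affineMap (AffineMap.lineMap pole (pole + v) : ℝ →ᵃ[ℝ] ℝ × ℝ)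
  have hmap : ⇑(AffineMap.lineMap pole (pole + v) : ℝ →ᵃ[ℝ] ℝ × ℝ) = fun t => pole + t • v := by
    ext1 t
    rw [AffineMap.lineMap_apply, vsub_eq_sub, vadd_eq_add, add_sub_cancel_left, add_comm]
  rwa [hmap] at hline

lemma continuousAt (h : FalseCentreProfile P f) {y : ℝ × ℝ} (hy : y ∈ interior P) :
    ContinuousAt f y :=
  ((h.concaveOn.subset interior_subset h.convex.interior).continuousOn
    isOpen_interior).continuousAt (isOpen_interior.mem_nhds hy)

lemma continuousAt_comp_neg (h : FalseCentreProfile P f) {y : ℝ × ℝ} (hy : y ∈ interior P) :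
    ContinuousAt (fun y => f (-y)) y :=
  (h.continuousAt (h.isSymmetricBody.neg_mem_interior hy)).comp continuous_neg.continuousAt

lemma continuousAt_chord (h : FalseCentreProfile P f) {y : ℝ × ℝ} (hy : y ∈ interior P) :
    ContinuousAt (chord f) y :=
  (h.continuousAt hy).add (h.continuousAt_comp_neg hy)

lemma continuousAt_shift (h : FalseCentreProfile P f) {y : ℝ × ℝ} (hy : y ∈ interior P) :
    ContinuousAt (shift f) y :=
  (h.continuousAt hy).sub (h.continuousAt_comp_neg hy)

lemma chord_le_chord_zero (h : FalseCentreProfile P f) {y : ℝ × ℝ} (hy : y ∈ P) :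
    chord f y ≤ chord f 0 := by
  have hconc := h.concaveOn_chord.2 hy (h.neg_mem hy) (by norm_num : (0 : ℝ) ≤ 1 / 2)
    (by norm_num : (0 : ℝ) ≤ 1 / 2) (by norm_num)
  rw [smul_neg, add_neg_cancel, chord_neg, smul_eq_mul] at hconc
  linarith

lemma exists_isChordReflection (h : FalseCentreProfile P f) {v : ℝ × ℝ} (hv : v.2 ≠ 0) :
    ∃ β, IsChordReflection P f v β := by
  obtain ⟨β, κ, hβ⟩ := h.exists_reflection v hv
  have hsymm : ∀ t : ℝ, pole + t • v ∈ P →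
      f (pole + (β - t) • v) - f (-(pole + t • v)) = κ := fun t ht => by
    simpa only [sub_sub_cancel] using (hβ _ (hβ t ht).1).2
  have hshift : ∀ t : ℝ, pole + t • v ∈ P →
      shift f (pole + t • v) + shift f (pole + (β - t) • v) = 2 * κ := fun t ht => by
    unfold shift
    linarith [hsymm t ht, (hβ t ht).2]
  refine ⟨β, fun t ht => (hβ t ht).1, fun t ht => ?_, fun t ht => ?_⟩
  · unfold chord
    linarith [hsymm t ht, (hβ t ht).2]
  · rw [hshift t ht, ← hshift 0 (by simpa using h.pole_mem)]
    simp only [zero_smul, add_zero, sub_zero]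

section Reflection

variable {v : ℝ × ℝ} {β : ℝ}

lemma apex_mem (h : FalseCentreProfile P f) (hβ : IsChordReflection P f v β) :
    pole + β • v ∈ P := by
  simpa using hβ.mem 0 (by simpa using h.pole_mem)

lemma chord_apex (h : FalseCentreProfile P f) (hβ : IsChordReflection P f v β) :
    chord f (pole + β • v) = chord f pole := by
  simpa using hβ.chord_eq 0 (by simpa using h.pole_mem)

/-- A point slightly behind `pole` is reflected to a point slightly beyond the apex. -/
lemma apex_mem_interior (h : FalseCentreProfile P f) (hβ : IsChordReflection P f v β) :
    pole + β • v ∈ interior P := by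
  have hnear : ∀ᶠ ε : ℝ in 𝓝[>] 0, pole + (-ε * β) • v ∈ P := by
    have hcont : Continuous fun ε : ℝ => pole + (-ε * β) • v := by fun_prop
    refine (hcont.tendsto' 0 pole (by simp)).mono_left nhdsWithin_le_nhds ?_
    exact mem_interior_iff_mem_nhds.1 h.pole_mem_interior
  obtain ⟨ε, hε, hpos : 0 < ε⟩ := (hnear.and self_mem_nhdsWithin).exists
  have hcombo := h.convex.combo_interior_self_mem_interior h.pole_mem_interior (hβ.mem _ hε)
    (show 0 < ε / (1 + ε) by positivity) (show 0 ≤ 1 / (1 + ε) by positivity) (by field_simp; ring)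
  convert hcombo using 1
  match_scalars <;> field_simp <;> ring

lemma mem_interior_of_mem_Icc (h : FalseCentreProfile P f) (hβ : IsChordReflection P f v β) {t : ℝ}
    (ht : t ∈ Icc 0 β) : pole + t • v ∈ interior P := by
  rcases eq_or_lt_of_le (ht.1.trans ht.2) with rfl | hpos
  · simpa [le_antisymm ht.2 ht.1] using h.pole_mem_interior
  have hcombo := h.convex.interior h.pole_mem_interior (h.apex_mem_interior hβ)
    (sub_nonneg.2 ((div_le_one hpos).2 ht.2)) (div_nonneg ht.1 hpos.le) (sub_add_cancel _ _)
  convert hcombo using 1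
  match_scalars <;> field_simp
  ring

end Reflection

lemma mul_nonneg_of_chord_lt (h : FalseCentreProfile P f) {v : ℝ × ℝ} {b c : ℝ}
    (hb : pole + b • v ∈ P) (hc : pole + c • v ∈ P)
    (hLb : chord f pole ≤ chord f (pole + b • v)) (hLc : chord f pole < chord f (pole + c • v)) :
    0 ≤ b * c := by
  by_contra! hbc
  have hzero : (0 : ℝ) ∈ openSegment ℝ b c := by
    rcases mul_neg_iff.1 hbc with ⟨hb, hc⟩ | ⟨hb, hc⟩
    · rw [openSegment_symm, openSegment_eq_Ioo (hc.trans hb)]; exact ⟨hc, hb⟩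
    · rw [openSegment_eq_Ioo (hb.trans hc)]; exact ⟨hb, hc⟩
  simpa using lt_apply_of_mem_openSegment (h.concaveOn_chord_line v) hb hc hzero hLb hLc

lemma mem_interior_of_chord_half_lt (h : FalseCentreProfile P f) {r : ℝ × ℝ} (hr : r ∈ P)
    (hL : chord f pole ≤ chord f r) (hr2 : r.2 ≠ 0)
    (hhalf : chord f pole < chord f (pole + (1 / 2 : ℝ) • (r - pole))) : r ∈ interior P := by
  obtain ⟨β, hβ⟩ := h.exists_isChordReflection (v := r - pole) (by simpa [pole] using hr2)
  have hr1 : pole + (1 : ℝ) • (r - pole) = r := by module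
  have hhalf_mem : pole + (1 / 2 : ℝ) • (r - pole) ∈ P := by
    convert h.convex h.pole_mem hr (by norm_num : (0 : ℝ) ≤ 1 / 2) (by norm_num : (0 : ℝ) ≤ 1 / 2)
      (by norm_num) using 1
    module
  have hside := h.mul_nonneg_of_chord_lt (hβ.mem 1 (by rwa [hr1])) hhalf_mem
    (by rwa [hβ.chord_eq 1 (by rwa [hr1]), hr1]) hhalf
  rw [← hr1]
  exact h.mem_interior_of_mem_Icc hβ ⟨zero_le_one, by linarith⟩

lemma lt_chord_smul (h : FalseCentreProfile P f) {y : ℝ × ℝ} (hy : y ∈ P) {l t : ℝ}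
    (hl : l < chord f 0) (hly : l ≤ chord f y) (ht0 : 0 ≤ t) (ht1 : t < 1) :
    l < chord f (t • y) := by
  rcases eq_or_lt_of_le ht0 with rfl | ht0
  · simpa using hl
  exact lt_apply_of_mem_openSegment h.concaveOn_chord hy h.isSymmetricBody.zero_mem
    ⟨t, 1 - t, ht0, by linarith, by ring, by simp⟩ hly hl

/-- If `r` lies beyond the apex of its line, then its reflection `r'` lies behind `pole`, and
`(r' - r) / 2` is a multiple of the midpoint of `pole` and `-r`. -/
theorem mem_interior_of_le_chord (h : FalseCentreProfile P f) (h0 : chord f pole < chord f 0)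
    {r : ℝ × ℝ} (hr : r ∈ P) (hL : chord f pole ≤ chord f r) : r ∈ interior P := by
  by_cases hr2 : r.2 = 0
  · by_contra hint
    linarith [h.chord_nonpos r hr hint hr2, h.chord_pos _ h.pole_mem_interior]
  obtain ⟨β, hβ⟩ := h.exists_isChordReflection (v := r - pole) (by simpa [pole] using hr2)
  have hr1 : pole + (1 : ℝ) • (r - pole) = r := by module
  rcases le_or_gt 1 β with hβ1 | hβ1
  · rw [← hr1]
    exact h.mem_interior_of_mem_Icc hβ ⟨zero_le_one, hβ1⟩
  set r' := pole + (β - 1) • (r - pole) with hr'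
  have hr'P : r' ∈ P := hβ.mem 1 (by rwa [hr1])
  have hLr' : chord f r' = chord f r := by rw [hr', hβ.chord_eq 1 (by rwa [hr1]), hr1]
  have hmidP : (1 / 2 : ℝ) • r' + (1 / 2 : ℝ) • -r ∈ P :=
    h.convex hr'P (h.neg_mem hr) (by norm_num) (by norm_num) (by norm_num)
  have hmid : chord f pole ≤ chord f ((1 / 2 : ℝ) • r' + (1 / 2 : ℝ) • -r) := by
    have hconc := h.concaveOn_chord.2 hr'P (h.neg_mem hr) (by norm_num : (0 : ℝ) ≤ 1 / 2)
      (by norm_num : (0 : ℝ) ≤ 1 / 2) (by norm_num)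
    rw [chord_neg, hLr', smul_eq_mul] at hconc
    linarith
  have hscale : (2 - β)⁻¹ • ((1 / 2 : ℝ) • r' + (1 / 2 : ℝ) • -r) =
      pole + (1 / 2 : ℝ) • (-r - pole) := by
    have : 2 - β ≠ 0 := by linarith
    rw [inv_smul_eq_iff₀ this, hr']
    module
  have hhalf := h.lt_chord_smul hmidP h0 hmid (inv_nonneg.2 (by linarith))
    (inv_lt_one_of_one_lt₀ (show 1 < 2 - β by linarith))
  rw [hscale] at hhalf
  simpa using h.isSymmetricBody.neg_mem_interior (h.mem_interior_of_chord_half_lt (h.neg_mem hr)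
    (by rwa [chord_neg]) (by simpa using hr2) hhalf)

variable {P : Set (ℝ × ℝ)} {f : ℝ × ℝ → ℝ}

lemma shift_combo (h : FalseCentreProfile P f) {u w : ℝ × ℝ} {a b : ℝ} (hu : u ∈ P) (hw : w ∈ P)
    (ha : 0 ≤ a) (hb : 0 ≤ b) (hab : a + b = 1) (huw : chord f u = chord f w)
    (hle : chord f (a • u + b • w) ≤ chord f u) :
    shift f (a • u + b • w) = a * shift f u + b * shift f w := by
  have hpos := h.concaveOn.2 hu hw ha hb hab
  have hneg := h.concaveOn.2 (h.neg_mem hu) (h.neg_mem hw) ha hb hab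
  rw [show a • -u + b • -w = -(a • u + b • w) by module] at hneg
  have hsum : chord f (a • u + b • w) ≤ a * chord f u + b * chord f w := by
    rwa [← huw, ← add_mul, hab, one_mul]
  simp only [smul_eq_mul] at hpos hneg
  unfold chord at hsum
  unfold shift
  linarith

/-- Otherwise `shift f` is affine on the segment from `pole` to `r`, with zero derivative at
`pole`. -/
lemma lt_chord_of_shift_ne (h : FalseCentreProfile P f) {r : ℝ × ℝ} (hr : r ∈ P)
    (hL : chord f r = chord f pole) (hD : shift f r ≠ shift f pole) {t : ℝ}
    (ht : t ∈ Ioo (0 : ℝ) 1) :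
    chord f pole < chord f (pole + t • (r - pole)) := by
  have hmem : ∀ x ∈ Icc (0 : ℝ) 1, pole + x • (r - pole) ∈ P := fun x hx =>
    h.convex.add_smul_sub_mem h.pole_mem hr hx
  by_contra! hle
  have hflat : ∀ x ∈ Icc (0 : ℝ) 1, chord f (pole + x • (r - pole)) ≤ chord f pole := by
    by_contra! hx
    obtain ⟨x, hx, hlt⟩ := hx
    exact hle.not_gt (lt_apply_of_mem_Ioo (h.concaveOn_chord_line (r - pole))
      (hmem 0 (by simp)) (hmem 1 (by simp)) (hmem x hx) ht (by simp) (by simp [hL]) hlt)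
  have haff : EqOn (fun x : ℝ => shift f pole + x * (shift f r - shift f pole))
      (fun x => shift f (pole + x • (r - pole))) (Icc 0 1) := fun x hx => by
    have hcombo : pole + x • (r - pole) = (1 - x) • pole + x • r := by module
    have hshift := h.shift_combo h.pole_mem hr (sub_nonneg.2 hx.2) hx.1 (sub_add_cancel 1 x)
      hL.symm (hcombo ▸ hflat x hx)
    simp only [hcombo, hshift]
    ring
  have hzero : HasDerivWithinAt (fun x : ℝ => shift f pole + x * (shift f r - shift f pole)) 0
      (Icc 0 1) 0 := by
    have hline : HasDerivAt (fun x : ℝ => pole + x • (r - pole)) (r - pole) 0 := by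
      simpa using ((hasDerivAt_id (0 : ℝ)).smul_const (r - pole)).const_add pole
    have hcomp := HasFDerivAt.comp_hasDerivAt_of_eq (0 : ℝ) h.hasFDerivAt_shift hline (by simp)
    exact hcomp.hasDerivWithinAt.congr haff (haff (by simp))
  have hslope : HasDerivWithinAt (fun x : ℝ => shift f pole + x * (shift f r - shift f pole))
      (shift f r - shift f pole) (Icc 0 1) 0 := by
    simpa using (((hasDerivAt_id (0 : ℝ)).mul_const _).const_add (shift f pole)).hasDerivWithinAt
  exact hD (sub_eq_zero.1 ((uniqueDiffOn_Icc_zero_one 0 (by simp)).eq_deriv _ hslope hzero))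

/-- The apex lies on the same level as `pole` and `r`, so it is one of them; were it `pole`, the
chord at the midpoint of `pole` and `r` would be matched by one behind `pole`. -/
lemma isChordReflection_one (h : FalseCentreProfile P f) {r : ℝ × ℝ} (hr : r ∈ P) (hr2 : r.2 ≠ 0)
    (hL : chord f r = chord f pole) (hD : shift f r ≠ shift f pole) :
    IsChordReflection P f (r - pole) 1 := by
  obtain ⟨β, hβ⟩ := h.exists_isChordReflection (v := r - pole) (by simpa [pole] using hr2)
  have hconc := h.concaveOn_chord_line (r - pole)
  have hhalf := h.lt_chord_of_shift_ne hr hL hD (t := 1 / 2) (by norm_num)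
  have hhalf_mem : pole + (1 / 2 : ℝ) • (r - pole) ∈ P :=
    h.convex.add_smul_sub_mem h.pole_mem hr (by norm_num)
  have hmem1 : pole + (1 : ℝ) • (r - pole) ∈ P := by simpa using hr
  have hL1 : chord f (pole + (1 : ℝ) • (r - pole)) = chord f pole := by simp [hL]
  have hbetween : ∀ {a b : ℝ}, pole + a • (r - pole) ∈ P →
      chord f (pole + a • (r - pole)) = chord f pole →
      chord f (pole + b • (r - pole)) = chord f pole → b ∉ openSegment ℝ a (1 / 2) :=
    fun ha hLa hLb hb => hLb.not_gt (lt_apply_of_mem_openSegment hconc ha hhalf_mem hb hLa.ge hhalf)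
  have hβhalf : 0 ≤ (β - 1 / 2) * (1 / 2) := h.mul_nonneg_of_chord_lt (hβ.mem _ hhalf_mem) hhalf_mem
    (by rw [hβ.chord_eq _ hhalf_mem]; exact hhalf.le) hhalf
  suffices hβ1 : β = 1 from hβ1 ▸ hβ
  rcases lt_trichotomy β 1 with hlt | heq | hgt
  · rcases eq_or_lt_of_le (show 1 / 2 ≤ β by linarith) with rfl | hlt'
    · exact absurd (h.chord_apex hβ) hhalf.ne'
    · refine absurd ?_ (hbetween hmem1 hL1 (h.chord_apex hβ))
      rw [openSegment_symm, openSegment_eq_Ioo (by norm_num)]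
      exact ⟨hlt', hlt⟩
  · exact heq
  · refine absurd ?_ (hbetween (h.apex_mem hβ) (h.chord_apex hβ) hL1)
    rw [openSegment_symm, openSegment_eq_Ioo (by linarith)]
    exact ⟨by norm_num, hgt⟩

/-- The point `w` where the line through `pole` and `y` meets the line through `-pole` and `R`
relates `shift f y` to `shift f R`. -/
lemma shift_eq_of_crossing (h : FalseCentreProfile P f) {y R w : ℝ × ℝ} {s t : ℝ} (hy : y ∈ P)
    (hR : R ∈ P) (hy2 : y.2 ≠ 0) (hR2 : R.2 ≠ 0) (hLy : chord f y = chord f pole)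
    (hLR : chord f R = chord f pole) (hDy : shift f y ≠ shift f pole)
    (hDR : shift f R ≠ -shift f pole) (hw : w ∈ P) (hwy : w = pole + s • (y - pole))
    (hwR : -w = pole + t • (-R - pole)) :
    shift f y = shift f R + (shift f (pole + (1 - s) • (y - pole)) - shift f pole) +
      (shift f (pole + (1 - t) • (-R - pole)) - shift f pole) := by
  have hDR' : shift f (-R) ≠ shift f pole := fun heq => hDR (by rw [← heq, shift_neg, neg_neg])
  have hrefl_y := (h.isChordReflection_one hy hy2 hLy hDy).shift_add s (hwy ▸ hw)
  have hrefl_R := (h.isChordReflection_one (h.neg_mem hR) (by simpa using hR2) (by rwa [chord_neg])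
    hDR').shift_add t (hwR ▸ h.neg_mem hw)
  rw [← hwy, one_smul, add_sub_cancel] at hrefl_y
  rw [← hwR, one_smul, add_sub_cancel, shift_neg, shift_neg] at hrefl_R
  linarith

lemma hasFDerivAt_shift_pole_add_sub (h : FalseCentreProfile P f) {V : Type*}
    [NormedAddCommGroup V] [NormedSpace ℝ V] {φ : V → ℝ × ℝ} {R : V} (hφ : DifferentiableAt ℝ φ R)
    (hφR : φ R = 0) :
    HasFDerivAt (fun y => shift f (pole + φ y) - shift f pole) (0 : V →L[ℝ] ℝ) R := by
  have hcomp : HasFDerivAt (shift f ∘ fun y => pole + φ y) _ R := HasFDerivAt.comp R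
    (by simpa [hφR] using h.hasFDerivAt_shift) (hφ.hasFDerivAt.const_add pole)
  simpa [Function.comp_def] using hcomp.sub_const (shift f pole)

/-- Both terms of `shift_eq_of_crossing` inherit the zero derivative of `shift f` at `pole`. -/
lemma hasFDerivWithinAt_shift_level (h : FalseCentreProfile P f) {R : ℝ × ℝ} (hR : R ∈ interior P)
    (hR2 : R.2 ≠ 0) (hLR : chord f R = chord f pole) (hDR : shift f R ≠ shift f pole)
    (hDR' : shift f R ≠ -shift f pole) :
    HasFDerivWithinAt (shift f) (0 : ℝ × ℝ →L[ℝ] ℝ) {y ∈ P | chord f y = chord f pole} R := by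
  set den : ℝ × ℝ → ℝ := fun y => (R.1 + 1) * y.2 - (y.1 - 1) * R.2
  set s : ℝ × ℝ → ℝ := fun y => 2 * R.2 / den y
  set t : ℝ × ℝ → ℝ := fun y => 2 * y.2 / den y
  have hdenR : den R = 2 * R.2 := by simp only [den]; ring
  have hden : den R ≠ 0 := by simpa [hdenR] using hR2
  have hsR : s R = 1 := by simp only [s, hdenR]; field_simp
  have htR : t R = 1 := by simp only [t, hdenR]; field_simp
  have hs : DifferentiableAt ℝ s R := by fun_prop (disch := exact hden)
  have ht : DifferentiableAt ℝ t R := by fun_prop (disch := exact hden)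
  have hmodel := ((h.hasFDerivAt_shift_pole_add_sub (φ := fun y => (1 - s y) • (y - pole))
    (by fun_prop) (by simp [hsR])).const_add (shift f R)).fun_add
      (h.hasFDerivAt_shift_pole_add_sub (φ := fun y => (1 - t y) • (-R - pole)) (by fun_prop)
        (by simp [htR]))
  rw [add_zero] at hmodel
  have hwR : pole + s R • (R - pole) = R := by rw [hsR]; module
  have hw : ∀ᶠ y in 𝓝 R, pole + s y • (y - pole) ∈ P := by
    have hcont : ContinuousAt (fun y => pole + s y • (y - pole)) R := by
      have := hs.continuousAt
      fun_prop
    refine hcont.tendsto.eventually_mem ?_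
    rwa [hwR, ← mem_interior_iff_mem_nhds]
  refine hmodel.hasFDerivWithinAt.congr_of_eventuallyEq ?_ (by simp [hsR, htR])
  filter_upwards [self_mem_nhdsWithin, nhdsWithin_le_nhds hw, nhdsWithin_le_nhds
    ((h.continuousAt_shift hR).eventually_ne hDR), nhdsWithin_le_nhds
    (continuous_snd.continuousAt.eventually_ne hR2), nhdsWithin_le_nhds
    (ContinuousAt.eventually_ne (g := den) (by fun_prop) hden)] with y hy hwP hDy hy2 hdeny
  refine h.shift_eq_of_crossing hy.1 (interior_subset hR) hy2 hR2 hy.2 hLR hDy hDR' hwP rfl ?_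
  ext
  · simp only [pole, Prod.fst_neg, Prod.fst_add, Prod.smul_fst, Prod.fst_sub, smul_eq_mul, s, t]
    field_simp
    simp only [den]
    ring
  · simp only [pole, Prod.snd_neg, Prod.snd_add, Prod.smul_snd, Prod.snd_sub, smul_eq_mul, s, t]
    field_simp
    ring

end FalseCentreProfile

lemma eq_of_hasDerivWithinAt_zero_of_countable {h : ℝ → ℝ} {a b : ℝ} {s : Set ℝ} (hab : a ≤ b)
    (hcont : ContinuousOn h (Icc a b)) (hs : s.Countable)
    (hderiv : ∀ x ∈ Ioo a b, h x ∉ s → HasDerivWithinAt h 0 (Ioo a b) x) : h a = h b := by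
  set A := {x ∈ Ioo a b | h x ∉ s}
  have hA : volume (h '' A) = 0 :=
    addHaar_image_eq_zero_of_det_fderivWithin_eq_zero volume
      (fun x hx => ((hderiv x hx.1 hx.2).mono (sep_subset _ _)).hasFDerivWithinAt)
      fun x _ => by simp [ContinuousLinearMap.det]
  have hsub : uIcc (h a) (h b) ⊆ h '' A ∪ (s ∪ {h a, h b}) := by
    rw [← uIcc_of_le hab] at hcont
    refine (intermediate_value_uIcc hcont).trans ?_
    rw [uIcc_of_le hab]
    rintro _ ⟨x, hx, rfl⟩
    rcases eq_or_lt_of_le hx.1 with rfl | hax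
    · simp
    rcases eq_or_lt_of_le hx.2 with rfl | hxb
    · simp
    by_cases hxs : h x ∈ s
    · exact Or.inr (Or.inl hxs)
    · exact Or.inl ⟨x, ⟨⟨hax, hxb⟩, hxs⟩, rfl⟩
  have hnull : volume (uIcc (h a) (h b)) = 0 := measure_mono_null hsub
    (measure_union_null hA ((hs.union (toFinite _).countable).measure_zero _))
  rw [Real.volume_interval, ENNReal.ofReal_eq_zero, abs_nonpos_iff, sub_eq_zero] at hnull
  exact hnull.symm

/-- The radial projection onto the boundary of `C`. -/
def radialProj {V : Type*} [AddCommGroup V] [Module ℝ V] (C : Set V) (y : V) : V :=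
  (gauge C y)⁻¹ • y

lemma radialProj_of_gauge_eq_one {V : Type*} [AddCommGroup V] [Module ℝ V] {C : Set V} {y : V}
    (hy : gauge C y = 1) : radialProj C y = y := by
  rw [radialProj, hy, inv_one, one_smul]

lemma radialProj_smul {V : Type*} [AddCommGroup V] [Module ℝ V] (C : Set V) {t : ℝ} (ht : 0 < t)
    (y : V) : radialProj C (t • y) = radialProj C y := by
  rw [radialProj, radialProj, gauge_smul_of_nonneg ht.le, smul_smul, smul_eq_mul, mul_inv,
    mul_right_comm, inv_mul_cancel₀ ht.ne', one_mul]

namespace IsSymmetricBody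

variable {V : Type*} [NormedAddCommGroup V] [NormedSpace ℝ V] {C : Set V}

lemma gauge_pos (h : IsSymmetricBody C) {y : V} (hy : y ≠ 0) : 0 < gauge C y :=
  (_root_.gauge_pos (absorbent_nhds_zero h.mem_nhds_zero)
    (NormedSpace.isVonNBounded_of_isBounded ℝ h.isCompact.isBounded)).2 hy

lemma gauge_radialProj (h : IsSymmetricBody C) {y : V} (hy : y ≠ 0) :
    gauge C (radialProj C y) = 1 := by
  rw [radialProj, gauge_smul_of_nonneg (inv_nonneg.2 (gauge_nonneg y)), smul_eq_mul,
    inv_mul_cancel₀ (h.gauge_pos hy).ne']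

lemma isBigO_radialProj (h : IsSymmetricBody C) {y : V} (hy : y ≠ 0) :
    (fun z => radialProj C z - radialProj C y) =O[𝓝 y] fun z => z - y := by
  obtain ⟨K, hK⟩ := h.convex.lipschitz_gauge h.mem_nhds_zero
  have hgauge : (fun z => gauge C z - gauge C y) =O[𝓝 y] fun z => z - y :=
    Asymptotics.IsBigO.of_bound K (Eventually.of_forall fun z => hK.norm_sub_le z y)
  have hsmul : DifferentiableAt ℝ (fun p : ℝ × V => p.1⁻¹ • p.2) (gauge C y, y) := by
    have := (h.gauge_pos hy).ne'
    fun_prop (disch := exact this)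
  have hcont : Tendsto (fun z => (gauge C z, z)) (𝓝 y) (𝓝 (gauge C y, y)) :=
    (hK.continuous.prodMk continuous_id).tendsto y
  exact (hsmul.isBigO_sub.comp_tendsto hcont).trans
    (hgauge.prod_left (Asymptotics.isBigO_refl _ _))

lemma continuousAt_radialProj (h : IsSymmetricBody C) {y : V} (hy : y ≠ 0) :
    ContinuousAt (radialProj C) y := by
  rw [ContinuousAt, tendsto_iff_norm_sub_tendsto_zero, ← tendsto_zero_iff_norm_tendsto_zero]
  exact (h.isBigO_radialProj hy).trans_tendsto (tendsto_sub_nhds_zero_iff.2 tendsto_id)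

end IsSymmetricBody

/-- The path `x ↦ (x, 1 - |x|)` on `[-1, 1]` from `-pole` to `pole` in the upper half-plane,
projected radially onto the boundary of `C`. -/
def upperBoundary (C : Set (ℝ × ℝ)) (x : ℝ) : ℝ × ℝ := radialProj C (x, 1 - |x|)

namespace IsSymmetricBody

variable {C : Set (ℝ × ℝ)}

lemma mk_one_sub_abs_ne_zero (x : ℝ) : (x, 1 - |x|) ≠ 0 := fun h => by
  obtain ⟨rfl, h⟩ := Prod.mk_eq_zero.1 h
  simp at h

lemma gauge_upperBoundary (h : IsSymmetricBody C) (x : ℝ) : gauge C (upperBoundary C x) = 1 :=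
  h.gauge_radialProj (mk_one_sub_abs_ne_zero x)

lemma isBigO_upperBoundary (h : IsSymmetricBody C) (x : ℝ) :
    (fun z => upperBoundary C z - upperBoundary C x) =O[𝓝 x] fun z => z - x := by
  have hpath : LipschitzWith 1 fun z : ℝ => (z, 1 - |z|) := by
    refine LipschitzWith.of_dist_le_mul fun z w => ?_
    rw [NNReal.coe_one, one_mul, Prod.dist_eq, max_le_iff]
    refine ⟨le_rfl, ?_⟩
    rw [dist_sub_left]
    exact abs_abs_sub_abs_le z w
  exact ((h.isBigO_radialProj (mk_one_sub_abs_ne_zero x)).comp_tendsto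
    (hpath.continuous.tendsto x)).trans (Asymptotics.IsBigO.of_bound 1 (Eventually.of_forall
      fun z => by simpa using hpath.norm_sub_le z x))

lemma continuous_upperBoundary (h : IsSymmetricBody C) : Continuous (upperBoundary C) :=
  continuous_iff_continuousAt.2 fun x =>
    (h.continuousAt_radialProj (mk_one_sub_abs_ne_zero x)).comp
      (f := fun x : ℝ => (x, 1 - |x|)) (by fun_prop)

lemma snd_upperBoundary_pos (h : IsSymmetricBody C) {x : ℝ} (hx : x ∈ Ioo (-1 : ℝ) 1) :
    0 < (upperBoundary C x).2 :=
  mul_pos (inv_pos.2 (h.gauge_pos (mk_one_sub_abs_ne_zero x))) (sub_pos.2 (abs_lt.2 hx))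

lemma upperBoundary_neg_one (h : IsSymmetricBody C) :
    upperBoundary C (-1) = -upperBoundary C 1 := by
  have hpath : ((-1, 1 - |-1|) : ℝ × ℝ) = -(1, 1 - |1|) := by ext <;> simp
  rw [upperBoundary, hpath, radialProj, gauge_neg h.neg_mem, smul_neg, upperBoundary, radialProj]

lemma upperBoundary_one (hC : gauge C pole = 1) : upperBoundary C 1 = pole := by
  have hpath : (1, 1 - |1|) = pole := by simp [pole]
  rw [upperBoundary, hpath, radialProj_of_gauge_eq_one hC]

lemma exists_upperBoundary_eq {y : ℝ × ℝ} (hgauge : gauge C y = 1) (hy2 : 0 ≤ y.2) :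
    ∃ x ∈ Icc (-1 : ℝ) 1, upperBoundary C x = y := by
  have hpos : 0 < |y.1| + y.2 := by
    refine lt_of_le_of_ne (by positivity) fun heq => ?_
    have hy : y = 0 := Prod.ext (abs_eq_zero.1 (by linarith [abs_nonneg y.1]))
      (by simp only [Prod.snd_zero]; linarith [abs_nonneg y.1])
    rw [hy, gauge_zero] at hgauge
    exact zero_ne_one hgauge
  have habs : |y.1 / (|y.1| + y.2)| = |y.1| / (|y.1| + y.2) := by rw [abs_div, abs_of_pos hpos]
  have hpath : (y.1 / (|y.1| + y.2), 1 - |y.1 / (|y.1| + y.2)|) = (|y.1| + y.2)⁻¹ • y := by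
    ext
    · simp only [Prod.smul_fst, smul_eq_mul]; ring
    · simp only [Prod.smul_snd, smul_eq_mul, habs]; field_simp; ring
  refine ⟨y.1 / (|y.1| + y.2), abs_le.1 ?_, ?_⟩
  · rw [habs]
    exact div_le_one_of_le₀ (le_add_of_nonneg_right hy2) hpos.le
  · rw [upperBoundary, hpath, radialProj_smul C (inv_pos.2 hpos), radialProj_of_gauge_eq_one hgauge]

end IsSymmetricBody

namespace FalseCentreProfile

variable {P : Set (ℝ × ℝ)} {f : ℝ × ℝ → ℝ}

lemma isSymmetricBody_superlevel (h : FalseCentreProfile P f) {l : ℝ} (hl : l < chord f 0) :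
    IsSymmetricBody {y ∈ P | l ≤ chord f y} where
  isCompact := h.isSymmetricBody.isCompact.of_isClosed_subset (h.isClosed_superlevel l)
    (sep_subset _ _)
  convex := h.concaveOn_chord.convex_ge l
  neg_mem y hy := ⟨h.neg_mem hy.1, by rw [chord_neg]; exact hy.2⟩
  zero_mem_interior := by
    have h0 := h.isSymmetricBody.zero_mem_interior
    rw [mem_interior_iff_mem_nhds]
    filter_upwards [h.isSymmetricBody.mem_nhds_zero,
      (h.continuousAt_chord h0).eventually_const_lt hl] with y hy hly using ⟨hy, hly.le⟩

lemma gauge_superlevel_eq_one_iff (h : FalseCentreProfile P f) {l : ℝ} (hl : chord f pole ≤ l)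
    (hl0 : l < chord f 0) {y : ℝ × ℝ} :
    gauge {y ∈ P | l ≤ chord f y} y = 1 ↔ y ∈ P ∧ chord f y = l := by
  have hC := h.isSymmetricBody_superlevel hl0
  rw [gauge_eq_one_iff_mem_frontier hC.convex hC.mem_nhds_zero,
    (h.isClosed_superlevel l).frontier_eq]
  constructor
  · rintro ⟨⟨hy, hly⟩, hint⟩
    refine ⟨hy, hly.antisymm' (not_lt.1 fun hlt => hint ?_)⟩
    have hyP := h.mem_interior_of_le_chord (hl.trans_lt hl0) hy (hl.trans hly)
    rw [mem_interior_iff_mem_nhds]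
    filter_upwards [mem_interior_iff_mem_nhds.1 hyP,
      (h.continuousAt_chord hyP).eventually_const_lt hlt] with z hz hlz using ⟨hz, hlz.le⟩
  · rintro ⟨hy, rfl⟩
    refine ⟨⟨hy, le_rfl⟩, fun hint => ?_⟩
    have hlt : gauge {z ∈ P | chord f y ≤ chord f z} y < 1 :=
      interior_subset_gauge_lt_one _ hint
    obtain ⟨t, ht0, ht1, z, hz, rfl⟩ := exists_lt_of_gauge_lt (absorbent_nhds_zero hC.mem_nhds_zero)
      hlt
    exact (h.lt_chord_smul hz.1 hl0 hz.2 ht0.le ht1).false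

section UpperBoundary

variable {l : ℝ}

lemma upperBoundary_mem_interior (h : FalseCentreProfile P f) (hl : chord f pole ≤ l)
    (hl0 : l < chord f 0) (x : ℝ) :
    upperBoundary {y ∈ P | l ≤ chord f y} x ∈ interior P :=
  have hmem := (h.gauge_superlevel_eq_one_iff hl hl0).1
    ((h.isSymmetricBody_superlevel hl0).gauge_upperBoundary x)
  h.mem_interior_of_le_chord (hl.trans_lt hl0) hmem.1 (hl.trans hmem.2.ge)

lemma chord_upperBoundary (h : FalseCentreProfile P f) (hl : chord f pole ≤ l)
    (hl0 : l < chord f 0) (x : ℝ) :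
    chord f (upperBoundary {y ∈ P | l ≤ chord f y} x) = l :=
  ((h.gauge_superlevel_eq_one_iff hl hl0).1
    ((h.isSymmetricBody_superlevel hl0).gauge_upperBoundary x)).2

lemma exists_upperBoundary_eq (h : FalseCentreProfile P f) (hl : chord f pole ≤ l)
    (hl0 : l < chord f 0) {y : ℝ × ℝ} (hy : y ∈ P) (hly : chord f y = l) (hy2 : 0 ≤ y.2) :
    ∃ x ∈ Icc (-1 : ℝ) 1, upperBoundary {y ∈ P | l ≤ chord f y} x = y :=
  IsSymmetricBody.exists_upperBoundary_eq ((h.gauge_superlevel_eq_one_iff hl hl0).2 ⟨hy, hly⟩) hy2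

lemma continuous_shift_upperBoundary (h : FalseCentreProfile P f) (hl : chord f pole ≤ l)
    (hl0 : l < chord f 0) :
    Continuous fun x => shift f (upperBoundary {y ∈ P | l ≤ chord f y} x) :=
  continuous_iff_continuousAt.2 fun x =>
    (h.continuousAt_shift (h.upperBoundary_mem_interior hl hl0 x)).comp
      (h.isSymmetricBody_superlevel hl0).continuous_upperBoundary.continuousAt

end UpperBoundary

lemma hasDerivAt_shift_upperBoundary (h : FalseCentreProfile P f) (h0 : chord f pole < chord f 0)
    {x : ℝ} (hx : x ∈ Ioo (-1 : ℝ) 1)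
    (hD : shift f (upperBoundary {y ∈ P | chord f pole ≤ chord f y} x) ≠ shift f pole)
    (hD' : shift f (upperBoundary {y ∈ P | chord f pole ≤ chord f y} x) ≠ -shift f pole) :
    HasDerivAt (fun x => shift f (upperBoundary {y ∈ P | chord f pole ≤ chord f y} x)) 0 x := by
  have hC := h.isSymmetricBody_superlevel h0
  have hint := h.upperBoundary_mem_interior le_rfl h0
  have hlevel := h.chord_upperBoundary le_rfl h0
  have hshift := h.hasFDerivWithinAt_shift_level (hint x) (hC.snd_upperBoundary_pos hx).ne'
    (hlevel x) hD hD'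
  have htend : Tendsto (upperBoundary {y ∈ P | chord f pole ≤ chord f y}) (𝓝 x)
      (𝓝[{y ∈ P | chord f y = chord f pole}] _) :=
    tendsto_nhdsWithin_iff.2 ⟨hC.continuous_upperBoundary.tendsto x,
      Eventually.of_forall fun z => ⟨interior_subset (hint z), hlevel z⟩⟩
  have hlittle := (hshift.isLittleO.comp_tendsto htend).trans_isBigO (hC.isBigO_upperBoundary x)
  rw [hasDerivAt_iff_isLittleO]
  simpa [Function.comp_def] using hlittle

/-- Along the boundary of the superlevel set, `shift f` has derivative zero wherever its value is
not `± shift f pole`, so it is constant; being odd, it vanishes. -/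
theorem shift_eq_zero_of_chord_eq_of_lt (h : FalseCentreProfile P f) (h0 : chord f pole < chord f 0)
    {y : ℝ × ℝ} (hy : y ∈ P) (hL : chord f y = chord f pole) : shift f y = 0 := by
  set C := {y ∈ P | chord f pole ≤ chord f y}
  have hC : IsSymmetricBody C := h.isSymmetricBody_superlevel h0
  have hpole : upperBoundary C 1 = pole := IsSymmetricBody.upperBoundary_one
    ((h.gauge_superlevel_eq_one_iff le_rfl h0).2 ⟨h.pole_mem, rfl⟩)
  have hconst : ∀ x ∈ Icc (-1 : ℝ) 1, shift f (upperBoundary C x) = shift f pole := by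
    intro x hx
    rw [← hpole]
    refine eq_of_hasDerivWithinAt_zero_of_countable (s := {shift f pole, -shift f pole}) hx.2
      (h.continuous_shift_upperBoundary le_rfl h0).continuousOn (toFinite _).countable
      fun z hz hne => ?_
    rw [mem_insert_iff, mem_singleton_iff, not_or] at hne
    exact (h.hasDerivAt_shift_upperBoundary h0 (Ioo_subset_Ioo_left hx.1 hz) hne.1
      hne.2).hasDerivWithinAt
  have hpole0 : shift f pole = 0 := by
    have hodd := hconst (-1) (by simp)
    rw [hC.upperBoundary_neg_one, hpole, shift_neg] at hodd
    linarith
  have hupper : ∀ z ∈ P, chord f z = chord f pole → 0 ≤ z.2 → shift f z = 0 := by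
    intro z hz hLz hz2
    obtain ⟨x, hx, rfl⟩ := h.exists_upperBoundary_eq le_rfl h0 hz hLz hz2
    rw [hconst x hx, hpole0]
  rcases le_total 0 y.2 with hy2 | hy2
  · exact hupper y hy hL hy2
  · simpa using hupper (-y) (h.neg_mem hy) (by rwa [chord_neg]) (by simpa using hy2)

variable {P : Set (ℝ × ℝ)} {f : ℝ × ℝ → ℝ}

theorem shift_eq_zero_of_chord_eq (h : FalseCentreProfile P f) {y : ℝ × ℝ} (hy : y ∈ P)
    (hL : chord f y = chord f pole) : shift f y = 0 := by
  rcases (h.chord_le_chord_zero h.pole_mem).lt_or_eq with h0 | h0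
  · exact h.shift_eq_zero_of_chord_eq_of_lt h0 hy hL
  have hconst : ∀ r ∈ P, chord f r = chord f pole → shift f r = shift f pole := by
    intro r hr hLr
    by_contra hne
    have hlt := h.lt_chord_of_shift_ne hr hLr hne (t := 1 / 2) (by norm_num)
    rw [h0] at hlt
    exact hlt.not_ge (h.chord_le_chord_zero (h.convex.add_smul_sub_mem h.pole_mem hr (by norm_num)))
  have hodd := hconst (-pole) (h.neg_mem h.pole_mem) (chord_neg f pole)
  rw [shift_neg] at hodd
  rw [hconst y hy hL]
  linarith

lemma shift_reflection (h : FalseCentreProfile P f) {v : ℝ × ℝ} {β t : ℝ}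
    (hβ : IsChordReflection P f v β) (ht : pole + t • v ∈ P) :
    shift f (pole + (β - t) • v) = -shift f (pole + t • v) := by
  have hsum := hβ.shift_add t ht
  rw [h.shift_eq_zero_of_chord_eq h.pole_mem rfl,
    h.shift_eq_zero_of_chord_eq (h.apex_mem hβ) (h.chord_apex hβ)] at hsum
  linarith

section Outside

variable {y : ℝ × ℝ}

lemma exists_neg_reflection (h : FalseCentreProfile P f) (hy : y ∈ P) (hy2 : y.2 ≠ 0)
    (hL : chord f y < chord f pole) : ∃ m : ℝ, 0 < m ∧ -pole + m • (y - pole) ∈ P ∧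
      chord f (-pole + m • (y - pole)) = chord f y ∧
      shift f (-pole + m • (y - pole)) = shift f y := by
  obtain ⟨β, hβ⟩ := h.exists_isChordReflection (v := y - pole) (by simpa [pole] using hy2)
  have hy1 : pole + (1 : ℝ) • (y - pole) = y := by module
  have hmem : pole + (1 : ℝ) • (y - pole) ∈ P := by rwa [hy1]
  have hneg : -pole + (1 - β) • (y - pole) = -(pole + (β - 1) • (y - pole)) := by module
  refine ⟨1 - β, sub_pos.2 (not_le.1 fun hβ1 => hL.not_ge ?_), ?_, ?_, ?_⟩
  · have h0β : (1 : ℝ) ∈ segment ℝ 0 β := by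
      rw [segment_eq_Icc (zero_le_one.trans hβ1)]; exact ⟨zero_le_one, hβ1⟩
    simpa [h.chord_apex hβ] using (h.concaveOn_chord_line (y - pole)).min_le_of_mem_segment
      (by simpa using h.pole_mem) (h.apex_mem hβ) h0β
  · rw [hneg]
    exact h.neg_mem (hβ.mem 1 hmem)
  · rw [hneg, chord_neg, hβ.chord_eq 1 hmem, hy1]
  · rw [hneg, shift_neg, h.shift_reflection hβ hmem, neg_neg, hy1]

/-- Each step `z ↦ -pole + m • (z - pole)` decreases `z.1 / |z.2|` by a definite amount. -/
lemma not_bddBelow_fst_div_abs_snd (h : FalseCentreProfile P f) (hy : y ∈ P) (hy2 : y.2 ≠ 0)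
    (hL : chord f y < chord f pole) :
    ¬BddBelow ((fun z : ℝ × ℝ => z.1 / |z.2|) ''
      {z ∈ P | chord f z = chord f y ∧ shift f z = shift f y ∧ z.2 ≠ 0}) := by
  intro hbdd
  obtain ⟨M, hM, hPM⟩ := h.isSymmetricBody.isCompact.isBounded.exists_pos_norm_le
  obtain ⟨_, ⟨z, ⟨hz, hLz, hDz, hz2⟩, rfl⟩, hlt⟩ := Real.lt_sInf_add_pos
    (Set.Nonempty.image (fun z : ℝ × ℝ => z.1 / |z.2|)
      (⟨y, hy, rfl, rfl, hy2⟩ : {z ∈ P | chord f z = chord f y ∧ shift f z = shift f y ∧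
        z.2 ≠ 0}.Nonempty)) (inv_pos.2 hM)
  obtain ⟨m, hm, hmP, hLm, hDm⟩ := h.exists_neg_reflection hz hz2 (hLz ▸ hL)
  have hsnd : (-pole + m • (z - pole)).2 = m * z.2 := by simp [pole]
  have hle := csInf_le hbdd ⟨_, ⟨hmP, hLm.trans hLz, hDm.trans hDz,
    by rw [hsnd]; exact mul_ne_zero hm.ne' hz2⟩, rfl⟩
  have hstep : (-pole + m • (z - pole)).1 / |(-pole + m • (z - pole)).2| =
      z.1 / |z.2| - |z.2|⁻¹ - (m * |z.2|)⁻¹ := by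
    have habs : |z.2| ≠ 0 := abs_ne_zero.2 hz2
    rw [hsnd, abs_mul, abs_of_pos hm]
    simp only [pole, Prod.fst_add, Prod.fst_neg, Prod.smul_fst, Prod.fst_sub, smul_eq_mul]
    field_simp
    ring
  have hinv : M⁻¹ ≤ |z.2|⁻¹ :=
    inv_anti₀ (abs_pos.2 hz2) ((norm_snd_le z).trans (hPM z hz))
  have hpos : 0 < (m * |z.2|)⁻¹ := inv_pos.2 (mul_pos hm (abs_pos.2 hz2))
  dsimp only at hle hlt
  linarith

lemma exists_abs_snd_le (h : FalseCentreProfile P f) (hy : y ∈ P) (hy2 : y.2 ≠ 0)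
    (hL : chord f y < chord f pole) {ε : ℝ} (hε : 0 < ε) :
    ∃ z ∈ P, chord f z = chord f y ∧ shift f z = shift f y ∧ z.1 ≤ -1 ∧ |z.2| ≤ ε := by
  obtain ⟨M, hM, hPM⟩ := h.isSymmetricBody.isCompact.isBounded.exists_pos_norm_le
  obtain ⟨_, ⟨z, ⟨hz, hLz, hDz, hz2⟩, rfl⟩, hlt⟩ :=
    not_bddBelow_iff.1 (h.not_bddBelow_fst_div_abs_snd hy hy2 hL) (-(M / ε))
  have habs : 0 < |z.2| := abs_pos.2 hz2
  obtain ⟨m, hm, hmP, hLm, hDm⟩ := h.exists_neg_reflection hz hz2 (hLz ▸ hL)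
  have hz1 : z.1 < -(M / ε) * |z.2| := (div_lt_iff₀ habs).1 hlt
  have hneg : M / ε * |z.2| > 0 := by positivity
  have hfst : (-pole + m • (z - pole)).1 = -1 + m * (z.1 - 1) := by simp [pole]
  have hsnd : |(-pole + m • (z - pole)).2| = m * |z.2| := by simp [pole, abs_mul, abs_of_pos hm]
  refine ⟨_, hmP, hLm.trans hLz, hDm.trans hDz, by rw [hfst]; nlinarith, ?_⟩
  have hbound : -(-pole + m • (z - pole)).1 ≤ M :=
    (neg_le_abs _).trans ((norm_fst_le _).trans (hPM _ hmP))
  rw [hfst] at hbound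
  have hle : M / ε * (m * |z.2|) ≤ M := by nlinarith
  rw [hsnd]
  rwa [div_mul_eq_mul_div, div_le_iff₀ hε, mul_le_mul_iff_right₀ hM] at hle

lemma exists_axis_point (h : FalseCentreProfile P f) (hy : y ∈ P) (hy2 : y.2 ≠ 0)
    (hL0 : 0 < chord f y) (hL : chord f y < chord f pole) : ∃ a ≤ -1,
      (a, (0 : ℝ)) ∈ P ∧ chord f (a, 0) = chord f y ∧ shift f (a, 0) = shift f y := by
  choose z hz hLz hDz hz1 hz2 using fun n : ℕ =>
    h.exists_abs_snd_le hy hy2 hL (Nat.one_div_pos_of_nat (α := ℝ) (n := n))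
  have hsnd : Tendsto (fun n => (z n).2) atTop (𝓝 0) :=
    squeeze_zero_norm hz2 tendsto_one_div_add_atTop_nhds_zero_nat
  obtain ⟨⟨a, b⟩, hab, φ, hφ, hlim⟩ := h.isSymmetricBody.isCompact.tendsto_subseq hz
  have hb : b = 0 := tendsto_nhds_unique (continuous_snd.continuousAt.tendsto.comp hlim)
    (hsnd.comp hφ.tendsto_atTop)
  subst hb
  have hle : chord f y ≤ chord f (a, 0) := ((h.isClosed_superlevel (chord f y)).mem_of_tendsto hlim
    (Eventually.of_forall fun n => ⟨hz _, (hLz _).ge⟩)).2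
  have hint : (a, (0 : ℝ)) ∈ interior P := by
    by_contra hint
    linarith [h.chord_nonpos _ hab hint rfl]
  refine ⟨a, le_of_tendsto (continuous_fst.continuousAt.tendsto.comp hlim)
    (Eventually.of_forall fun n => hz1 _), hab, ?_, ?_⟩
  · exact tendsto_nhds_unique ((h.continuousAt_chord hint).tendsto.comp hlim)
      (tendsto_const_nhds.congr fun n => (hLz _).symm)
  · exact tendsto_nhds_unique ((h.continuousAt_shift hint).tendsto.comp hlim)
      (tendsto_const_nhds.congr fun n => (hDz _).symm)

lemma axis_point_unique (h : FalseCentreProfile P f) {a b : ℝ} (ha : a ≤ -1) (hb : b ≤ -1)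
    (haP : (a, (0 : ℝ)) ∈ P) (hbP : (b, (0 : ℝ)) ∈ P) (hab : chord f (a, 0) = chord f (b, 0))
    (hL : chord f (a, 0) < chord f pole) : a = b := by
  wlog hlt : a < b generalizing a b
  · rcases (not_lt.1 hlt).lt_or_eq with hgt | heq
    · exact (this hb ha hbP haP hab.symm (hab ▸ hL) hgt).symm
    · exact heq.symm
  exfalso
  rcases hb.lt_or_eq with hb | rfl
  · refine (lt_apply_of_mem_openSegment h.concaveOn_chord haP (h.neg_mem h.pole_mem)
      (z := (b, 0)) ?_ le_rfl (by rwa [chord_neg])).ne hab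
    have hneg : -pole = (-1, 0) := by simp [pole]
    rw [hneg, ← Prod.image_mk_openSegment_left, openSegment_eq_Ioo (hlt.trans hb)]
    exact mem_image_of_mem _ ⟨hlt, hb⟩
  · have hneg : ((-1 : ℝ), (0 : ℝ)) = -pole := by simp [pole]
    rw [hneg, chord_neg] at hab
    exact hL.ne hab

/-- The axis point where the steps from `y` accumulate also serves `-y`. -/
theorem shift_eq_zero_of_chord_lt (h : FalseCentreProfile P f) (hy : y ∈ P) (hy2 : y.2 ≠ 0)
    (hL0 : 0 < chord f y) (hL : chord f y < chord f pole) : shift f y = 0 := by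
  obtain ⟨a, ha, haP, hLa, hDa⟩ := h.exists_axis_point hy hy2 hL0 hL
  obtain ⟨b, hb, hbP, hLb, hDb⟩ := h.exists_axis_point (h.neg_mem hy) (by simpa using hy2)
    (by rwa [chord_neg]) (by rwa [chord_neg])
  rw [chord_neg] at hLb
  obtain rfl := h.axis_point_unique ha hb haP hbP (hLa.trans hLb.symm) (hLa ▸ hL)
  rw [shift_neg] at hDb
  linarith

end Outside

variable {P : Set (ℝ × ℝ)} {f : ℝ × ℝ → ℝ}

section Inside

lemma exists_reflection_of_lt (h : FalseCentreProfile P f) {y : ℝ × ℝ} (hy : y ∈ P)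
    (hy2 : y.2 ≠ 0) (hL : chord f pole < chord f y) : ∃ k : ℝ, 0 < k ∧ pole + k • (y - pole) ∈ P ∧
      chord f (pole + k • (y - pole)) = chord f y ∧
      shift f (pole + k • (y - pole)) = -shift f y := by
  obtain ⟨β, hβ⟩ := h.exists_isChordReflection (v := y - pole) (by simpa [pole] using hy2)
  have hy1 : pole + (1 : ℝ) • (y - pole) = y := by module
  have hmem : pole + (1 : ℝ) • (y - pole) ∈ P := by rwa [hy1]
  have hLβ : chord f (pole + (β - 1) • (y - pole)) = chord f y := by rw [hβ.chord_eq 1 hmem, hy1]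
  have hside := h.mul_nonneg_of_chord_lt (hβ.mem 1 hmem) hmem (hLβ ▸ hL.le) (hy1.symm ▸ hL)
  refine ⟨β - 1, lt_of_le_of_ne (by linarith) fun heq => hL.ne ?_, hβ.mem 1 hmem, hLβ, ?_⟩
  · rw [← hLβ, ← heq, zero_smul, add_zero]
  · rw [h.shift_reflection hβ hmem, hy1]

lemma exists_abs_shift_eq_of_lt (h : FalseCentreProfile P f) {y : ℝ × ℝ} (hy : y ∈ P)
    (hy2 : y.2 ≠ 0) (hL : chord f pole < chord f y) (hD : shift f y ≠ 0) :
    ∃ k : ℝ, 0 < k ∧ k ≠ 1 ∧ pole + k • (y - pole) ∈ P ∧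
      chord f (pole + k • (y - pole)) = chord f y ∧
      |shift f (pole + k • (y - pole))| = |shift f y| := by
  obtain ⟨k, hk0, hk, hLk, hDk⟩ := h.exists_reflection_of_lt hy hy2 hL
  refine ⟨k, hk0, ?_, hk, hLk, by rw [hDk, abs_neg]⟩
  rintro rfl
  rw [one_smul, add_sub_cancel, self_eq_neg] at hDk
  exact hD hDk

/-- The ray from `pole` through `y` crosses the ray from `-pole` through `w` before reaching `y` and
`w`, so going on along the former leads to a triangle with vertices `0` and `w` containing `y`. -/
lemma exists_combo_of_crossing {y w : ℝ × ℝ} {k : ℝ} (hk : 1 < k) (hy2 : 0 < y.2) (hw2 : 0 < w.2)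
    (hneg : (y.1 - 1) / y.2 < (w.1 - 1) / w.2) (hpos : (y.1 + 1) / y.2 ≤ (w.1 + 1) / w.2) :
    ∃ a b : ℝ, 0 ≤ a ∧ 0 ≤ b ∧ a + b < 1 ∧ y = a • (pole + k • (y - pole)) + b • w := by
  rw [div_lt_div_iff₀ hy2 hw2] at hneg
  rw [div_le_div_iff₀ hy2 hw2] at hpos
  obtain ⟨E, hE⟩ : ∃ E, E = (w.1 + 1) * y.2 - (y.1 - 1) * w.2 := ⟨_, rfl⟩
  obtain ⟨d, hd⟩ : ∃ d, d = k * (E - y.2) - w.2 := ⟨_, rfl⟩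
  have hsum : y.2 + w.2 < E := by linarith
  have hdpos : 0 < d := by
    have hscale := lt_mul_of_one_lt_left (hw2.trans (lt_sub_iff_add_lt'.2 hsum)) hk
    linarith
  refine ⟨(E - y.2 - w.2) / d, (k - 1) * y.2 / d, div_nonneg (by linarith) hdpos.le,
    div_nonneg (by nlinarith) hdpos.le, ?_, ?_⟩
  · rw [← add_div, div_lt_one hdpos]
    nlinarith
  · ext
    · simp only [pole, Prod.fst_add, Prod.smul_fst, Prod.fst_sub, smul_eq_mul]
      field_simp
      linear_combination y.1 * hd + (k - 1) * hE
    · simp only [pole, Prod.snd_add, Prod.smul_snd, Prod.snd_sub, smul_eq_mul]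
      field_simp
      linear_combination y.2 * hd

lemma exists_isMinOn_and_homothetic_mem {V : Type*} [AddCommGroup V] [Module ℝ V]
    [TopologicalSpace V] {W : Set V} (hW : IsCompact W) (hne : W.Nonempty) {c : V} {φ : V → ℝ}
    (hφ : ContinuousOn φ W) (hinv : ∀ y ∈ W, ∀ k : ℝ, 0 < k → φ (c + k • (y - c)) = φ y)
    (hmove : ∀ y ∈ W, ∃ k : ℝ, 0 < k ∧ k ≠ 1 ∧ c + k • (y - c) ∈ W) :
    ∃ y ∈ W, IsMinOn φ W y ∧ ∃ k : ℝ, 1 < k ∧ c + k • (y - c) ∈ W := by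
  obtain ⟨y, hy, hmin⟩ := hW.exists_isMinOn hne hφ
  obtain ⟨k, hk0, hk1, hky⟩ := hmove y hy
  rcases hk1.lt_or_gt with hk1 | hk1
  · refine ⟨_, hky, fun z hz => (hinv y hy k hk0).trans_le (hmin hz), k⁻¹,
      (one_lt_inv₀ hk0).2 hk1, ?_⟩
    rwa [add_sub_cancel_left, smul_smul, inv_mul_cancel₀ hk0.ne', one_smul, add_sub_cancel]
  · exact ⟨y, hy, hmin, k, hk1, hky⟩

/-- Take `y` and `w` extreme in direction as seen from `pole` and from `-pole`. -/
lemma eq_empty_of_forall_exists_homothetic_mem {C W : Set (ℝ × ℝ)} (hconv : Convex ℝ C)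
    (habs : Absorbent ℝ C) (hW : IsCompact W) (hgauge : ∀ y ∈ W, gauge C y = 1)
    (hW2 : ∀ y ∈ W, 0 < y.2)
    (hpos : ∀ y ∈ W, ∃ k : ℝ, 0 < k ∧ k ≠ 1 ∧ pole + k • (y - pole) ∈ W)
    (hneg : ∀ y ∈ W, ∃ k : ℝ, 0 < k ∧ k ≠ 1 ∧ -pole + k • (y - -pole) ∈ W) : W = ∅ := by
  by_contra hne
  rw [← Ne, ← nonempty_iff_ne_empty] at hne
  obtain ⟨y, hy, hymin, k, hk, hky⟩ := exists_isMinOn_and_homothetic_mem hW hne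
    (φ := fun z => (z.1 - 1) / z.2)
    (fun z hz => by have := (hW2 z hz).ne'; fun_prop (disch := exact this))
    (fun z _ k hk => by simp [pole, mul_div_mul_left _ _ hk.ne']) hpos
  obtain ⟨w, hw, hwmin, j, hj, hjw⟩ := exists_isMinOn_and_homothetic_mem hW hne
    (φ := fun z => -((z.1 + 1) / z.2))
    (fun z hz => by have := (hW2 z hz).ne'; fun_prop (disch := exact this))
    (fun z _ k hk => by simp [pole, mul_div_mul_left _ _ hk.ne']) hneg
  have hw2 := hW2 w hw
  have hyw : (y.1 - 1) / y.2 ≤ (w.1 - 1) / w.2 := hymin hw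
  have hwy : (y.1 + 1) / y.2 ≤ (w.1 + 1) / w.2 := neg_le_neg_iff.1 (hwmin hy)
  have hjw1 : (-pole + j • (w - -pole)).1 = -1 + j * (w.1 + 1) := by simp [pole]
  have hjw2 : (-pole + j • (w - -pole)).2 = j * w.2 := by simp [pole]
  obtain ⟨a, b, ha, hb, hab, hcombo⟩ := exists_combo_of_crossing hk (hW2 y hy)
    (hW2 _ hjw) (hyw.trans_lt (by
      rw [hjw1, hjw2, div_lt_div_iff₀ hw2 (by positivity)]
      nlinarith)) (hwy.trans_eq (by
      rw [hjw1, hjw2, neg_add_eq_sub, sub_add_cancel, mul_div_mul_left _ _ (by positivity)]))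
  have hlt : gauge C y < 1 := calc
    gauge C y ≤
        gauge C (a • (pole + k • (y - pole))) + gauge C (b • (-pole + j • (w - -pole))) := by
      conv_lhs => rw [hcombo]
      exact gauge_add_le hconv habs _ _
    _ = a + b := by
      rw [gauge_smul_of_nonneg ha, gauge_smul_of_nonneg hb, hgauge _ hky, hgauge _ hjw, smul_eq_mul,
        smul_eq_mul, mul_one, mul_one]
    _ < 1 := hab
  exact hlt.ne (hgauge y hy)

section Level

variable {l : ℝ}

lemma eq_empty_of_isCompact_abs_shift_eq (h : FalseCentreProfile P f) (hl : chord f pole < l)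
    (hl0 : l < chord f 0) {v : ℝ} (hv : 0 < v)
    (hW : IsCompact {z ∈ P | chord f z = l ∧ |shift f z| = v ∧ 0 < z.2}) :
    {z ∈ P | chord f z = l ∧ |shift f z| = v ∧ 0 < z.2} = ∅ := by
  have hC := h.isSymmetricBody_superlevel hl0
  have hmove : ∀ z ∈ P, chord f z = l → |shift f z| = v → z.2 ≠ 0 → ∃ k : ℝ, 0 < k ∧ k ≠ 1 ∧
      pole + k • (z - pole) ∈ P ∧ chord f (pole + k • (z - pole)) = l ∧
      |shift f (pole + k • (z - pole))| = v := by
    rintro z hz rfl rfl hz2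
    exact h.exists_abs_shift_eq_of_lt hz hz2 hl (abs_pos.1 hv)
  refine eq_empty_of_forall_exists_homothetic_mem hC.convex
    (absorbent_nhds_zero hC.mem_nhds_zero) hW
    (fun z hz => (h.gauge_superlevel_eq_one_iff hl.le hl0).2 ⟨hz.1, hz.2.1⟩)
    (fun z hz => hz.2.2.2) ?_ ?_
  · rintro z ⟨hz, hLz, hDz, hz2⟩
    obtain ⟨k, hk0, hk1, hk, hLk, hDk⟩ := hmove z hz hLz hDz hz2.ne'
    refine ⟨k, hk0, hk1, hk, hLk, hDk, ?_⟩
    simpa [pole] using mul_pos hk0 hz2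
  · rintro z ⟨hz, hLz, hDz, hz2⟩
    obtain ⟨k, hk0, hk1, hk, hLk, hDk⟩ := hmove (-z) (h.neg_mem hz) (by rwa [chord_neg])
      (by rwa [shift_neg, abs_neg]) (by simpa using hz2.ne')
    have hneg : -pole + k • (z - -pole) = -(pole + k • (-z - pole)) := by module
    refine ⟨k, hk0, hk1, hneg ▸ h.neg_mem hk, by rwa [hneg, chord_neg],
      by rwa [hneg, shift_neg, abs_neg], ?_⟩
    simpa [pole] using mul_pos hk0 hz2

lemma abs_shift_upperBoundary_ne (h : FalseCentreProfile P f) (hl : chord f pole < l)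
    (hl0 : l < chord f 0) {v : ℝ} (hv : 0 < v)
    (hne : |shift f (upperBoundary {y ∈ P | l ≤ chord f y} 1)| ≠ v) :
    ∀ x ∈ Icc (-1 : ℝ) 1, |shift f (upperBoundary {y ∈ P | l ≤ chord f y} x)| ≠ v := by
  set C := {y ∈ P | l ≤ chord f y}
  have hC : IsSymmetricBody C := h.isSymmetricBody_superlevel hl0
  set S := {x ∈ Icc (-1 : ℝ) 1 | |shift f (upperBoundary C x)| = v}
  set W := {z ∈ P | chord f z = l ∧ |shift f z| = v ∧ 0 < z.2}
  have hSW : ∀ x ∈ S, upperBoundary C x ∈ W := by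
    rintro x ⟨hx, hxv⟩
    refine ⟨interior_subset (h.upperBoundary_mem_interior hl.le hl0 x),
      h.chord_upperBoundary hl.le hl0 x, hxv,
      hC.snd_upperBoundary_pos ⟨hx.1.lt_of_ne ?_, hx.2.lt_of_ne ?_⟩⟩
    · rintro rfl
      exact hne (by rwa [hC.upperBoundary_neg_one, shift_neg, abs_neg] at hxv)
    · rintro rfl
      exact hne hxv
  have himage : upperBoundary C '' S = W := by
    refine Subset.antisymm (by rintro _ ⟨x, hx, rfl⟩; exact hSW x hx) ?_
    rintro z ⟨hz, hLz, hDz, hz2⟩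
    obtain ⟨x, hx, rfl⟩ := h.exists_upperBoundary_eq hl.le hl0 hz hLz hz2.le
    exact ⟨x, ⟨hx, hDz⟩, rfl⟩
  have hS : IsCompact S := isCompact_Icc.inter_right
    (isClosed_eq (h.continuous_shift_upperBoundary hl.le hl0).abs continuous_const)
  have hempty : W = ∅ := h.eq_empty_of_isCompact_abs_shift_eq hl hl0 hv
    (himage.subst (motive := IsCompact) (hS.image hC.continuous_upperBoundary))
  exact fun x hx hxv => notMem_empty _ (hempty ▸ hSW x ⟨hx, hxv⟩)

lemma shift_upperBoundary_one (h : FalseCentreProfile P f) (hl : chord f pole < l)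
    (hl0 : l < chord f 0) :
    shift f (upperBoundary {y ∈ P | l ≤ chord f y} 1) = 0 := by
  have hC := h.isSymmetricBody_superlevel hl0
  set D := fun x => shift f (upperBoundary {y ∈ P | l ≤ chord f y} x)
  by_contra! hne
  have hD : 0 < |D 1| := abs_pos.2 hne
  have hodd : D (-1) = -D 1 := by simp only [D, hC.upperBoundary_neg_one, shift_neg]
  have hhalf : D 1 / 2 ∈ uIcc (D (-1)) (D 1) := by
    rw [hodd, mem_uIcc]
    rcases lt_or_gt_of_ne hne with hlt | hgt
    · right; constructor <;> linarith
    · left; constructor <;> linarith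
  obtain ⟨x, hx, hDx⟩ := intermediate_value_uIcc
    (h.continuous_shift_upperBoundary hl.le hl0).continuousOn hhalf
  rw [uIcc_of_le (by norm_num)] at hx
  refine h.abs_shift_upperBoundary_ne hl hl0 (half_pos hD) (half_lt_self hD).ne' x hx ?_
  change |D x| = _
  rw [show D x = _ from hDx, abs_div, abs_two]

theorem shift_eq_zero_of_lt_chord (h : FalseCentreProfile P f) (hl : chord f pole < l)
    (hl0 : l < chord f 0) {y : ℝ × ℝ} (hy : y ∈ P)
    (hLy : chord f y = l) : shift f y = 0 := by
  have hupper : ∀ z ∈ P, chord f z = l → 0 ≤ z.2 → shift f z = 0 := by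
    intro z hz hLz hz2
    obtain ⟨x, hx, rfl⟩ := h.exists_upperBoundary_eq hl.le hl0 hz hLz hz2
    by_contra hne
    exact h.abs_shift_upperBoundary_ne hl hl0 (abs_pos.2 hne)
      (by rw [h.shift_upperBoundary_one hl hl0, abs_zero]; exact (abs_pos.2 hne).ne) x hx rfl
  rcases le_total 0 y.2 with hy2 | hy2
  · exact hupper y hy hLy hy2
  · simpa using hupper (-y) (h.neg_mem hy) (by rwa [chord_neg]) (by simpa using hy2)

end Level

end Inside

/-- On the line `ℝ y`, `shift f` is linear as long as the chord is maximal and vanishes beyond; by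
continuity it vanishes throughout. -/
lemma shift_eq_zero_of_chord_eq_chord_zero (h : FalseCentreProfile P f)
    (h0 : chord f pole < chord f 0) {y : ℝ × ℝ} (hy : y ∈ P) (hL : chord f y = chord f 0) :
    shift f y = 0 := by
  rcases eq_or_ne y 0 with rfl | hy0
  · simp [shift]
  have hzero := h.isSymmetricBody.zero_mem
  have hcont : Continuous fun t : ℝ => t • y := by fun_prop
  have hcompact : IsCompact {t : ℝ | t • y ∈ {z ∈ P | chord f 0 ≤ chord f z}} :=
    (isClosedEmbedding_smul_left hy0).isCompact_preimage
      (h.isSymmetricBody.isCompact.of_isClosed_subset (h.isClosed_superlevel _) (sep_subset _ _))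
  have hone : (1 : ℝ) • y ∈ {z ∈ P | chord f 0 ≤ chord f z} := by rw [one_smul]; exact ⟨hy, hL.ge⟩
  obtain ⟨τ, ⟨hτP, hLτ⟩, hτmax⟩ := hcompact.exists_isGreatest ⟨1, hone⟩
  have hτ : 1 ≤ τ := hτmax hone
  replace hLτ : chord f (τ • y) = chord f 0 := (h.chord_le_chord_zero hτP).antisymm hLτ
  have hint : τ • y ∈ interior P := h.mem_interior_of_le_chord h0 hτP (by rw [hLτ]; exact h0.le)
  have hbeyond : ∀ᶠ t in 𝓝[>] τ, shift f (t • y) = 0 := by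
    filter_upwards [self_mem_nhdsWithin, nhdsWithin_le_nhds (hcont.continuousAt.eventually
      (isOpen_interior.mem_nhds hint)), nhdsWithin_le_nhds (hcont.continuousAt.eventually
      ((h.continuousAt_chord hint).eventually_const_lt (hLτ ▸ h0)))] with t ht htP hLt
    refine h.shift_eq_zero_of_lt_chord hLt (not_le.1 fun hle => ?_) (interior_subset htP) rfl
    exact (hτmax ⟨interior_subset htP, hle⟩).not_gt ht
  have hshiftτ : shift f (τ • y) = 0 := tendsto_nhds_unique
    (((h.continuousAt_shift hint).tendsto.comp (hcont.tendsto τ)).mono_left nhdsWithin_le_nhds)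
    (tendsto_const_nhds.congr' (hbeyond.mono fun t ht => ht.symm))
  have hcombo : (1 - τ⁻¹) • (0 : ℝ × ℝ) + τ⁻¹ • τ • y = y := by
    rw [smul_zero, zero_add, inv_smul_smul₀ (by positivity)]
  have hlin := h.shift_combo hzero hτP (sub_nonneg.2 (inv_le_one_of_one_le₀ hτ))
    (inv_nonneg.2 (by positivity)) (sub_add_cancel 1 _) hLτ.symm (by rw [hcombo, hL])
  rw [hcombo, hshiftτ] at hlin
  simpa [shift] using hlin

lemma shift_eq_zero_of_lt_chord_pole (h : FalseCentreProfile P f) {y : ℝ × ℝ}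
    (hy : y ∈ interior P) (hL : chord f y < chord f pole) : shift f y = 0 := by
  rcases ne_or_eq y.2 0 with hy2 | hy2
  · exact h.shift_eq_zero_of_chord_lt (interior_subset hy) hy2 (h.chord_pos y hy) hL
  have hcont : Tendsto (fun t : ℝ => y + t • ((0, 1) : ℝ × ℝ)) (𝓝[≠] 0) (𝓝 y) := by
    have : Continuous fun t : ℝ => y + t • ((0, 1) : ℝ × ℝ) := by fun_prop
    simpa using (this.tendsto 0).mono_left nhdsWithin_le_nhds
  refine tendsto_nhds_unique ((h.continuousAt_shift hy).tendsto.comp hcont)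
    (tendsto_const_nhds.congr' ?_)
  filter_upwards [hcont.eventually (isOpen_interior.mem_nhds hy),
    hcont.eventually ((h.continuousAt_chord hy).eventually_lt_const hL), self_mem_nhdsWithin]
    with t htP htL ht
  exact (h.shift_eq_zero_of_chord_lt (interior_subset htP) (by simpa [hy2] using ht)
    (h.chord_pos _ htP) htL).symm

theorem shift_eq_zero (h : FalseCentreProfile P f) {y : ℝ × ℝ} (hy : y ∈ interior P) :
    shift f y = 0 := by
  rcases lt_trichotomy (chord f y) (chord f pole) with hlt | heq | hgt
  · exact h.shift_eq_zero_of_lt_chord_pole hy hlt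
  · exact h.shift_eq_zero_of_chord_eq (interior_subset hy) heq
  · have hyP := interior_subset hy
    rcases (h.chord_le_chord_zero hyP).lt_or_eq with hlt | heq
    · exact h.shift_eq_zero_of_lt_chord hgt hlt hyP rfl
    · exact h.shift_eq_zero_of_chord_eq_chord_zero (heq ▸ hgt) hyP heq

end FalseCentreProfile

/-! ### Differentiability of boundary functions -/

section Gauge

variable {E : Type*} [NormedAddCommGroup E] [NormedSpace ℝ E] {s : Set E} {x : E}

lemma differentiableAt_gauge_smul (h : DifferentiableAt ℝ (gauge s) x) {c : ℝ} (hc : 0 < c) :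
    DifferentiableAt ℝ (gauge s) (c • x) := by
  have hscale : gauge s = fun y => c * gauge s (c⁻¹ • y) := by
    ext y
    rw [gauge_smul_of_nonneg (by positivity), smul_eq_mul, mul_inv_cancel_left₀ hc.ne']
  rw [hscale]
  refine (DifferentiableAt.comp (g := gauge s) (c • x) ?_ (by fun_prop)).const_mul c
  rwa [inv_smul_smul₀ hc.ne']

lemma apply_self_eq_gauge_of_hasFDerivAt {φ : E →L[ℝ] ℝ} (h : HasFDerivAt (gauge s) φ x) :
    φ x = gauge s x := by
  have hray : HasDerivAt (fun t : ℝ => t • x) x 1 := by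
    simpa using (hasDerivAt_id (1 : ℝ)).smul_const x
  have hcomp := HasFDerivAt.comp_hasDerivAt (1 : ℝ) (by rwa [one_smul]) hray
  have hlin : HasDerivAt (fun t : ℝ => t * gauge s x) (gauge s x) 1 := by
    simpa using (hasDerivAt_id (1 : ℝ)).mul_const (gauge s x)
  refine hcomp.unique (hlin.congr_of_eventuallyEq ?_)
  filter_upwards [lt_mem_nhds (zero_lt_one (α := ℝ))] with t ht
  exact gauge_smul_of_nonneg ht.le x

end Gauge

section Implicit

variable {V : Type*} [NormedAddCommGroup V] [NormedSpace ℝ V] {f : V → ℝ} {q : V}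

lemma isBigO_sub_of_concaveOn [FiniteDimensional ℝ V] {s : Set V} (hf : ConcaveOn ℝ s f)
    (hq : q ∈ interior s) : (fun y => f y - f q) =O[𝓝 q] fun y => y - q := by
  obtain ⟨k, t, ht, hk⟩ := (hf.subset interior_subset hf.1.interior).locallyLipschitzOn
    isOpen_interior hq
  rw [isOpen_interior.nhdsWithin_eq hq] at ht
  refine Asymptotics.IsBigO.of_bound k ?_
  filter_upwards [ht] with y hy
  exact hk.norm_sub_le hy (mem_of_mem_nhds ht)

lemma differentiableAt_of_eventually_eq_graph {G : V × ℝ → ℝ} {φ : V × ℝ →L[ℝ] ℝ}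
    (hG : HasFDerivAt G φ (q, f q)) (hφ : φ (0, 1) ≠ 0)
    (hgraph : ∀ᶠ y in 𝓝 q, G (y, f y) = G (q, f q))
    (hO : (fun y => f y - f q) =O[𝓝 q] fun y => y - q) : DifferentiableAt ℝ f q := by
  have hid : Tendsto (fun y : V => y - q) (𝓝 q) (𝓝 0) := by
    simpa using (tendsto_id (x := 𝓝 q)).sub_const q
  have htend : Tendsto (fun y => (y, f y)) (𝓝 q) (𝓝 (q, f q)) :=
    tendsto_id.prodMk_nhds (by simpa using (hO.trans_tendsto hid).add_const (f q))
  have hpair : (fun y => (y, f y) - (q, f q)) =O[𝓝 q] fun y => y - q :=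
    (Asymptotics.isBigO_refl _ _).prod_left hO
  have hsmall := ((hG.isLittleO.comp_tendsto htend).trans_isBigO hpair).const_mul_left
    (-(φ (0, 1))⁻¹)
  refine ⟨-(φ (0, 1))⁻¹ • φ.comp (ContinuousLinearMap.inl ℝ V ℝ), .of_isLittleO ?_⟩
  refine hsmall.congr' ?_ EventuallyEq.rfl
  filter_upwards [hgraph] with y hy
  have hsplit : (y, f y) - (q, f q) = (y - q, 0) + (f y - f q) • ((0, 1) : V × ℝ) := by simp
  simp only [Function.comp_apply, hy, hsplit, map_add, map_smul, smul_eq_mul, smul_apply,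
    ContinuousLinearMap.comp_apply, ContinuousLinearMap.inl_apply]
  field_simp
  ring

lemma differentiableAt_of_gauge_graph_eq_one {s : Set (V × ℝ)}
    (hs : DifferentiableAt ℝ (gauge s) (0, f q)) (hgraph : ∀ᶠ y in 𝓝 q, gauge s (y - q, f y) = 1)
    (hO : (fun y => f y - f q) =O[𝓝 q] fun y => y - q) : DifferentiableAt ℝ f q := by
  obtain ⟨φ, hφ⟩ := hs
  have hq : gauge s (0, f q) = 1 := by simpa using hgraph.self_of_nhds
  have hφ1 : φ (0, 1) ≠ 0 := by
    intro h
    have heuler := apply_self_eq_gauge_of_hasFDerivAt hφ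
    have hsmul : ((0 : V), f q) = f q • ((0 : V), (1 : ℝ)) := by simp
    rw [hq, hsmul, map_smul, h, smul_zero] at heuler
    exact zero_ne_one heuler
  have hG : HasFDerivAt (fun x : V × ℝ => gauge s (x - (q, 0))) φ (q, f q) :=
    (hasFDerivAt_comp_sub _).2 (by simpa using hφ)
  refine differentiableAt_of_eventually_eq_graph hG hφ1 ?_ hO
  filter_upwards [hgraph] with y hy
  simp [hy, hq]

end Implicit

/-! ### Boundary functions of symmetric bodies -/

/-- The function on the shadow `Prod.fst '' K` whose graph is the upper boundary of `K`. By
symmetry the lower boundary is the graph of `y ↦ -upper K (-y)`. -/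
def upper {V : Type*} (K : Set (V × ℝ)) (y : V) : ℝ := sSup {z | (y, z) ∈ K}

lemma fst_mem_interior_image {X Y : Type*} [TopologicalSpace X] [TopologicalSpace Y]
    {s : Set (X × Y)} {x : X × Y} (hx : x ∈ interior s) : x.1 ∈ interior (Prod.fst '' s) :=
  interior_maximal (image_mono interior_subset) (isOpenMap_fst _ isOpen_interior) ⟨x, hx, rfl⟩

namespace IsSymmetricBody

section Upper

variable {V : Type*} [NormedAddCommGroup V] [NormedSpace ℝ V] {K : Set (V × ℝ)} {y : V} {z : ℝ}

lemma fst_image (h : IsSymmetricBody K) : IsSymmetricBody (Prod.fst '' K) where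
  isCompact := h.isCompact.image continuous_fst
  convex := h.convex.linear_image (LinearMap.fst ℝ V ℝ)
  neg_mem := by
    rintro _ ⟨x, hx, rfl⟩
    exact ⟨-x, h.neg_mem x hx, rfl⟩
  zero_mem_interior := fst_mem_interior_image h.zero_mem_interior

lemma isCompact_fiber (h : IsSymmetricBody K) (y : V) : IsCompact {z | (y, z) ∈ K} :=
  (h.isCompact.image continuous_snd).of_isClosed_subset
    (h.isCompact.isClosed.preimage (by fun_prop)) fun _ hz => ⟨_, hz, rfl⟩

lemma mk_upper_mem (h : IsSymmetricBody K) (hy : y ∈ Prod.fst '' K) : (y, upper K y) ∈ K := by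
  obtain ⟨⟨y, z⟩, hz, rfl⟩ := hy
  exact (h.isCompact_fiber y).sSup_mem ⟨z, hz⟩

lemma le_upper (h : IsSymmetricBody K) (hz : (y, z) ∈ K) : z ≤ upper K y :=
  le_csSup (h.isCompact_fiber y).bddAbove hz

lemma mk_neg_upper_neg_mem (h : IsSymmetricBody K) (hy : y ∈ Prod.fst '' K) :
    (y, -upper K (-y)) ∈ K := by
  simpa using h.neg_mem _ (h.mk_upper_mem (h.fst_image.neg_mem y hy))

lemma neg_upper_neg_le (h : IsSymmetricBody K) (hz : (y, z) ∈ K) : -upper K (-y) ≤ z :=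
  neg_le.1 (h.le_upper (h.neg_mem _ hz))

lemma mk_mem_of_le_upper (h : IsSymmetricBody K) (hy : y ∈ Prod.fst '' K)
    (hlower : -upper K (-y) ≤ z) (hupper : z ≤ upper K y) : (y, z) ∈ K := by
  have hfiber : Convex ℝ {z : ℝ | (y, z) ∈ K} := by
    intro a ha b hb s t hs ht hst
    simpa [← add_smul, hst] using h.convex ha hb hs ht hst
  exact hfiber.ordConnected.out (h.mk_neg_upper_neg_mem hy) (h.mk_upper_mem hy) ⟨hlower, hupper⟩

lemma concaveOn_upper (h : IsSymmetricBody K) : ConcaveOn ℝ (Prod.fst '' K) (upper K) :=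
  ⟨h.fst_image.convex, fun _ hx _ hy _ _ ha hb hab =>
    h.le_upper (h.convex (h.mk_upper_mem hx) (h.mk_upper_mem hy) ha hb hab)⟩

lemma mk_upper_notMem_interior (h : IsSymmetricBody K) : (y, upper K y) ∉ interior K := by
  intro hmem
  have hcont : ContinuousAt (fun t : ℝ => (y, t)) (upper K y) := by fun_prop
  obtain ⟨t, htK, ht⟩ := (((hcont.eventually_mem
    (isOpen_interior.mem_nhds hmem)).filter_mono nhdsWithin_le_nhds).and
      (self_mem_nhdsWithin (s := Ioi (upper K y)))).exists
  exact (h.le_upper (interior_subset htK)).not_gt ht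

lemma upper_pos (h : IsSymmetricBody K) (hy : (y, (0 : ℝ)) ∈ interior K) : 0 < upper K y :=
  (h.le_upper (interior_subset hy)).lt_of_ne fun heq => h.mk_upper_notMem_interior (heq ▸ hy)

lemma chord_upper_nonneg (h : IsSymmetricBody K) (hy : y ∈ Prod.fst '' K) :
    0 ≤ chord (upper K) y := by
  linarith [h.neg_upper_neg_le (h.mk_upper_mem hy), chord.eq_1 (upper K) y]

lemma chord_upper_pos (h : IsSymmetricBody K) (hy : y ∈ interior (Prod.fst '' K)) :
    0 < chord (upper K) y := by
  have hcont : ContinuousAt (fun t : ℝ => t • y) 1 := by fun_prop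
  obtain ⟨t, hty, ht⟩ := (((hcont.eventually_mem
    (isOpen_interior.mem_nhds (by rwa [one_smul]))).filter_mono nhdsWithin_le_nhds).and
      (self_mem_nhdsWithin (s := Ioi (1 : ℝ)))).exists
  have ht0 : 0 < t := one_pos.trans ht
  have h0 : 0 < chord (upper K) 0 := by
    have := h.upper_pos (y := 0) h.zero_mem_interior
    simpa [chord] using this
  have hseg : y ∈ openSegment ℝ (t • y) 0 :=
    ⟨t⁻¹, 1 - t⁻¹, inv_pos.2 ht0, sub_pos.2 (inv_lt_one_of_one_lt₀ ht), add_sub_cancel _ _,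
      by rw [smul_zero, add_zero, inv_smul_smul₀ ht0.ne']⟩
  exact lt_apply_of_mem_openSegment (h.fst_image.concaveOn_chord h.concaveOn_upper)
    (interior_subset hty)
    h.fst_image.zero_mem hseg (h.chord_upper_nonneg (interior_subset hty)) h0

lemma isClosed_superlevel_chord_upper (h : IsSymmetricBody K) (l : ℝ) :
    IsClosed {y ∈ Prod.fst '' K | l ≤ chord (upper K) y} := by
  have hclosed : IsClosed {w : (V × ℝ) × V × ℝ | w.2.1 = -w.1.1 ∧ l ≤ w.1.2 + w.2.2} :=
    (isClosed_eq (f := fun w : (V × ℝ) × V × ℝ => w.2.1) (by fun_prop) (by fun_prop)).inter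
      (isClosed_le (f := fun _ => l) (by fun_prop) (by fun_prop))
  have himage := ((h.isCompact.prod h.isCompact).inter_right hclosed).image
    (f := fun w => w.1.1) (by fun_prop : Continuous _)
  convert himage.isClosed using 1
  ext y
  constructor
  · rintro ⟨hy, hl⟩
    exact ⟨((y, upper K y), (-y, upper K (-y))),
      ⟨⟨h.mk_upper_mem hy, h.mk_upper_mem (h.fst_image.neg_mem y hy)⟩, rfl, hl⟩, rfl⟩
  · rintro ⟨⟨⟨y, z⟩, y', z'⟩, ⟨⟨hz, hz'⟩, rfl : y' = -y, hl⟩, rfl⟩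
    exact ⟨⟨_, hz, rfl⟩, hl.trans (add_le_add (h.le_upper hz) (h.le_upper hz'))⟩

end Upper

end IsSymmetricBody

lemma mem_nhds_zero_preimage_add {E : Type*} [NormedAddCommGroup E] {K : Set E} {p : E}
    (hp : p ∈ interior K) : (fun x => p + x) ⁻¹' K ∈ 𝓝 0 :=
  (continuous_const_add p).continuousAt.preimage_mem_nhds
    (by simpa using mem_interior_iff_mem_nhds.1 hp)

lemma gauge_preimage_add_sub_eq_one {E : Type*} [NormedAddCommGroup E] [NormedSpace ℝ E] {K : Set E}
    {p x : E} (hK : IsClosed K) (hconv : Convex ℝ K) (hp : p ∈ interior K) (hx : x ∈ K)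
    (hxint : x ∉ interior K) : gauge ((fun x => p + x) ⁻¹' K) (x - p) = 1 := by
  have hinterior := (Homeomorph.addLeft p).preimage_interior K
  rw [gauge_eq_one_iff_mem_frontier (hconv.translate_preimage_right p)
    (mem_nhds_zero_preimage_add hp), (hK.preimage (continuous_const_add p)).frontier_eq]
  refine ⟨by simpa using hx, fun hmem => hxint ?_⟩
  simpa using hinterior.ge hmem

namespace IsSymmetricBody

section Differentiable

variable {V : Type*} [NormedAddCommGroup V] [NormedSpace ℝ V] {K : Set (V × ℝ)} {q : V}

lemma differentiableAt_of_graph_notMem_interior (h : IsSymmetricBody K) {f : V → ℝ}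
    (hq : (q, (0 : ℝ)) ∈ interior K)
    (hdiff : DifferentiableAt ℝ (gauge ((fun x => (q, (0 : ℝ)) + x) ⁻¹' K)) (0, f q))
    (hmem : ∀ y ∈ Prod.fst '' K, (y, f y) ∈ K) (hint : ∀ y, (y, f y) ∉ interior K)
    (hO : (fun y => f y - f q) =O[𝓝 q] fun y => y - q) : DifferentiableAt ℝ f q := by
  refine differentiableAt_of_gauge_graph_eq_one hdiff ?_ hO
  filter_upwards [isOpen_interior.mem_nhds (fst_mem_interior_image hq)] with y hy
  simpa using gauge_preimage_add_sub_eq_one h.isCompact.isClosed h.convex hq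
    (hmem y (interior_subset hy)) (hint y)

lemma differentiableAt_shift_upper [FiniteDimensional ℝ V] (h : IsSymmetricBody K)
    (hq : (q, (0 : ℝ)) ∈ interior K)
    (hpos : DifferentiableAt ℝ (gauge ((fun x => (q, (0 : ℝ)) + x) ⁻¹' K)) (0, 1))
    (hneg : DifferentiableAt ℝ (gauge ((fun x => (q, (0 : ℝ)) + x) ⁻¹' K)) (0, -1)) :
    DifferentiableAt ℝ (shift (upper K)) q := by
  have hq' : ((-q, 0) : V × ℝ) ∈ interior K := by simpa using h.neg_mem_interior hq
  have hqint := fst_mem_interior_image hq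
  have hupper : DifferentiableAt ℝ (upper K) q := by
    refine h.differentiableAt_of_graph_notMem_interior hq ?_ (fun _ => h.mk_upper_mem)
      (fun _ => h.mk_upper_notMem_interior) (isBigO_sub_of_concaveOn h.concaveOn_upper hqint)
    simpa using differentiableAt_gauge_smul hpos (h.upper_pos hq)
  have hlower : DifferentiableAt ℝ (fun y => -upper K (-y)) q := by
    refine h.differentiableAt_of_graph_notMem_interior hq ?_ (fun _ => h.mk_neg_upper_neg_mem)
      (fun y hy => h.mk_upper_notMem_interior (y := -y) (by simpa using h.neg_mem_interior hy)) ?_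
    · simpa using differentiableAt_gauge_smul hneg (h.upper_pos hq')
    · refine (isBigO_sub_of_concaveOn (h.fst_image.concaveOn_comp_neg h.concaveOn_upper)
        hqint).neg_left.congr_left fun y => ?_
      ring
  exact (hupper.add hlower).congr_of_eventuallyEq (.of_forall fun y => sub_eq_add_neg _ _)

end Differentiable

end IsSymmetricBody

/-- The section of `K` by the plane spanned by `p` and `u` has no nondegenerate edge parallel to `u`
on which the `p`-coordinate is maximal. -/
def NoExtremalEdge {E : Type*} [AddCommGroup E] [Module ℝ E] (K : Set E) (p u : E) : Prop :=
  ∀ a z₁ z₂ : ℝ, a • p + z₁ • u ∈ K → a • p + z₂ • u ∈ K →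
    (∀ a' z' : ℝ, a' • p + z' • u ∈ K → a' ≤ a) → z₁ = z₂

/-- The conditions on the direction `u` of the chords under which the planar argument applies to a
body `K` with false centre `p`. -/
structure IsGenericDirection {E : Type*} [NormedAddCommGroup E] [NormedSpace ℝ E] (K : Set E)
    (p u : E) : Prop where
  noExtremalEdge : NoExtremalEdge K p u
  differentiableAt_gauge : DifferentiableAt ℝ (gauge ((fun x => p + x) ⁻¹' K)) u
  differentiableAt_gauge_neg : DifferentiableAt ℝ (gauge ((fun x => p + x) ⁻¹' K)) (-u)

namespace IsSymmetricBody

variable {K : Set ((ℝ × ℝ) × ℝ)}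

lemma chord_upper_nonpos_of_notMem_interior (h : IsSymmetricBody K)
    (hedge : NoExtremalEdge K (pole, 0) (0, 1)) {y : ℝ × ℝ} (hy : y ∈ Prod.fst '' K)
    (hyint : y ∉ interior (Prod.fst '' K)) (hy2 : y.2 = 0) : chord (upper K) y ≤ 0 := by
  wlog hy1 : 0 ≤ y.1 generalizing y
  · rw [← chord_neg]
    refine this (h.fst_image.neg_mem y hy) (fun hmem => hyint ?_) (by simp [hy2])
      (by simpa using (not_le.1 hy1).le)
    simpa using h.fst_image.neg_mem_interior hmem
  have hmk : ∀ a z : ℝ, a • ((pole, 0) : (ℝ × ℝ) × ℝ) + z • (0, 1) = ((a, 0), z) := fun a z => by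
    simp [pole]
  have hmax : ∀ a z : ℝ, ((a, 0), z) ∈ K → a ≤ y.1 := by
    intro a z haz
    by_contra! hlt
    have ha : 0 < a := hy1.trans_lt hlt
    have hmem := h.fst_image.smul_mem_interior ⟨_, haz, rfl⟩
      ⟨div_nonneg hy1 ha.le, (div_lt_one ha).2 hlt⟩
    rw [Prod.smul_mk, smul_eq_mul, div_mul_cancel₀ _ ha.ne', smul_zero, ← hy2] at hmem
    exact hyint hmem
  obtain ⟨a, b⟩ := y
  obtain rfl : b = 0 := hy2
  have heq : upper K (a, 0) = -upper K (-(a, 0)) :=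
    hedge a _ _ ((hmk _ _).symm ▸ h.mk_upper_mem hy)
      ((hmk _ _).symm ▸ h.mk_neg_upper_neg_mem hy) fun a' z' hmem => hmax a' z' (hmk a' z' ▸ hmem)
  rw [chord, heq, neg_add_cancel]

lemma exists_reflection_upper (h : IsSymmetricBody K) (hsec : HasSymmetricSections K (pole, 0))
    {v : ℝ × ℝ} (hv : v ≠ 0) :
    ∃ β κ : ℝ, ∀ t : ℝ, pole + t • v ∈ Prod.fst '' K → pole + (β - t) • v ∈ Prod.fst '' K ∧
      upper K (pole + t • v) - upper K (-(pole + (β - t) • v)) = κ := by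
  have hli : LinearIndependent ℝ ![((v, 0) : (ℝ × ℝ) × ℝ), (0, 1)] := by
    refine LinearIndependent.pair_iff.2 fun s t hst => ?_
    simpa [Prod.ext_iff, hv] using hst
  obtain ⟨c, hc, hsymm⟩ := hsec _ (finrank_span_pair_of_linearIndependent hli)
  obtain ⟨β, κ, rfl⟩ := Submodule.mem_span_pair.1 hc
  have hrefl : ∀ t z : ℝ, (pole + t • v, z) ∈ K → (pole + (β - t) • v, κ - z) ∈ K := by
    intro t z hz
    have := hsymm (t • (v, 0) + z • (0, 1)) (Submodule.mem_span_pair.2 ⟨t, z, rfl⟩)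
      (by simpa using hz)
    convert this using 1
    ext <;> simp [sub_mul]
  refine ⟨β, κ, fun t ht => ?_⟩
  have htop := hrefl t _ (h.mk_upper_mem ht)
  have hbot := hrefl (β - t) _ (h.mk_neg_upper_neg_mem ⟨_, htop, rfl⟩)
  rw [sub_sub_cancel] at hbot
  exact ⟨⟨_, htop, rfl⟩, by linarith [h.neg_upper_neg_le htop, h.le_upper hbot]⟩

theorem exists_falseCentreProfile (h : IsSymmetricBody K)
    (hpole : ((pole, 0) : (ℝ × ℝ) × ℝ) ∈ interior K) (hsec : HasSymmetricSections K (pole, 0))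
    (hgen : IsGenericDirection K (pole, 0) (0, 1)) :
    ∃ ω : ℝ × ℝ →L[ℝ] ℝ, FalseCentreProfile (Prod.fst '' K) (fun y => upper K y - ω y) := by
  obtain ⟨φ, hφ⟩ := h.differentiableAt_shift_upper hpole hgen.differentiableAt_gauge
    (by simpa using hgen.differentiableAt_gauge_neg)
  refine ⟨(1 / 2 : ℝ) • φ, ?_⟩
  set ω := (1 / 2 : ℝ) • φ with hω
  have hchord : chord (fun y => upper K y - ω y) = chord (upper K) := by
    ext y
    simp only [chord, map_neg]
    ring
  have hshift : shift (fun y => upper K y - ω y) = fun y => shift (upper K) y - φ y := by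
    ext y
    simp only [shift, hω, map_neg, smul_apply, smul_eq_mul]
    ring
  exact {
    isSymmetricBody := h.fst_image
    pole_mem_interior := fst_mem_interior_image hpole
    concaveOn := h.concaveOn_upper.sub (ω.toLinearMap.convexOn h.fst_image.convex)
    isClosed_superlevel := by simpa only [hchord] using h.isClosed_superlevel_chord_upper
    chord_pos := by simpa only [hchord] using fun y => h.chord_upper_pos
    chord_nonpos := by
      simpa only [hchord] using fun y => h.chord_upper_nonpos_of_notMem_interior hgen.noExtremalEdge
    exists_reflection := by
      intro v hv
      obtain ⟨β, κ, hβκ⟩ := h.exists_reflection_upper hsec (v := v) (by rintro rfl; exact hv rfl)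
      refine ⟨β, κ - ω (2 • pole + β • v), fun t ht => ⟨(hβκ t ht).1, ?_⟩⟩
      rw [← (hβκ t ht).2]
      simp only [map_neg, map_add, map_smul, map_nsmul, smul_eq_mul]
      ring
    hasFDerivAt_shift := by
      rw [hshift]
      simpa using hφ.fun_sub φ.hasFDerivAt }

theorem isReflectionDirection_vertical (h : IsSymmetricBody K)
    (hpole : ((pole, 0) : (ℝ × ℝ) × ℝ) ∈ interior K) (hsec : HasSymmetricSections K (pole, 0))
    (hgen : IsGenericDirection K (pole, 0) (0, 1)) : IsReflectionDirection K (0, 1) := by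
  obtain ⟨ω, hω⟩ := h.exists_falseCentreProfile hpole hsec hgen
  let f : Dual ℝ ((ℝ × ℝ) × ℝ) :=
    (2 : ℝ) • (LinearMap.snd ℝ (ℝ × ℝ) ℝ - ω.toLinearMap ∘ₗ LinearMap.fst ℝ (ℝ × ℝ) ℝ)
  have hmem : MapsTo (preReflection ((0, 1) : (ℝ × ℝ) × ℝ) f) (interior K) K := by
    rintro ⟨y, z⟩ hyz
    have hy := fst_mem_interior_image hyz
    have hshift : upper K y - upper K (-y) = 2 * ω y := by
      have := hω.shift_eq_zero hy
      simp only [shift, map_neg] at this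
      linarith
    have hzK := interior_subset hyz
    have heq : preReflection ((0, 1) : (ℝ × ℝ) × ℝ) f (y, z) = (y, 2 * ω y - z) := by
      ext <;> simp [f, preReflection_apply]
      ring
    rw [heq]
    exact h.mk_mem_of_le_upper (interior_subset hy) (by linarith [h.le_upper hzK])
      (by linarith [h.neg_upper_neg_le hzK])
  refine ⟨f, by simp [f], ?_⟩
  have hclosure := hmem.closure (LinearMap.continuous_of_finiteDimensional _)
  rwa [h.convex.closure_interior_eq_closure_of_nonempty_interior ⟨0, h.zero_mem_interior⟩,
    h.isCompact.isClosed.closure_eq] at hclosure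

end IsSymmetricBody

/-! ### Almost every direction is generic -/

section Edge

variable {E : Type*} [NormedAddCommGroup E] [NormedSpace ℝ E] {K : Set E} {p u : E}
  {a a' t t' δ ε : ℝ}

/-- The section of `K` by the plane spanned by `p` and `u` has maximal `p`-coordinate `a`, attained
along `[a p + t u, a p + (t + δ) u]`. Maximality is only required on `interior K`, which makes the
condition closed in all variables. -/
structure IsExtremalEdge (K : Set E) (p u : E) (δ a t : ℝ) : Prop where
  left_mem : a • p + t • u ∈ K
  right_mem : a • p + (t + δ) • u ∈ K
  le_of_mem_interior : ∀ a' t' : ℝ, a' • p + t' • u ∈ interior K → a' ≤ a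

lemma IsExtremalEdge.le_of_mem (h : IsExtremalEdge K p u δ a t) (hconv : Convex ℝ K)
    (h0 : 0 ∈ interior K) (hmem : a' • p + t' • u ∈ K) : a' ≤ a := by
  have hscale : ∀ s ∈ Ioo (0 : ℝ) 1, s * a' ≤ a := by
    intro s hs
    have hint := hconv.combo_interior_self_mem_interior h0 hmem (sub_pos.2 hs.2) hs.1.le
      (sub_add_cancel 1 s)
    rw [smul_zero, zero_add, smul_add, smul_smul, smul_smul] at hint
    exact h.le_of_mem_interior _ _ hint
  have htend : Tendsto (fun s : ℝ => s * a') (𝓝[<] 1) (𝓝 a') := by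
    have hcont : Continuous fun s : ℝ => s * a' := by fun_prop
    simpa using (hcont.tendsto 1).mono_left nhdsWithin_le_nhds
  exact le_of_tendsto htend (mem_of_superset (Ioo_mem_nhdsLT zero_lt_one) hscale)

/-- Turning `u` towards `p` moves the extremal edge strictly down, past its own length. -/
lemma IsExtremalEdge.add_le (h : IsExtremalEdge K p u δ a t)
    (h' : IsExtremalEdge K p (u + ε • p) δ a' t') (hconv : Convex ℝ K) (h0 : 0 ∈ interior K)
    (hε : 0 < ε) : t' + δ ≤ t := by
  have hle : a' + (t' + δ) * ε ≤ a :=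
    h.le_of_mem hconv h0 (t' := t' + δ) (by convert h'.right_mem using 1; module)
  have hle' : a - t * ε ≤ a' :=
    h'.le_of_mem hconv h0 (t' := t) (by convert h.left_mem using 1; module)
  exact le_of_mul_le_mul_right (by linarith) hε

lemma countable_setOf_exists_isExtremalEdge (hconv : Convex ℝ K) (h0 : 0 ∈ interior K)
    (hδ : 0 < δ) :
    {ε : ℝ | ∃ a t, IsExtremalEdge K p (u + ε • p) δ a t}.Countable := by
  have hchoose : ∀ ε : ℝ, ∃ a t, (∃ a t, IsExtremalEdge K p (u + ε • p) δ a t) →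
      IsExtremalEdge K p (u + ε • p) δ a t := fun ε => by
    by_cases h : ∃ a t, IsExtremalEdge K p (u + ε • p) δ a t
    · exact h.imp fun a => Exists.imp fun t ht _ => ht
    · exact ⟨0, 0, fun h' => absurd h' h⟩
  choose a t hedge using hchoose
  have hstep : ∀ ε ε' : ℝ, (∃ a t, IsExtremalEdge K p (u + ε • p) δ a t) →
      (∃ a t, IsExtremalEdge K p (u + ε' • p) δ a t) → ε < ε' → t ε' + δ ≤ t ε := by
    intro ε ε' h h' hlt
    refine (hedge ε h).add_le (a' := a ε') ?_ hconv h0 (sub_pos.2 hlt)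
    rw [add_assoc, ← add_smul, add_sub_cancel]
    exact hedge ε' h'
  refine Set.PairwiseDisjoint.countable_of_isOpen (s := fun ε => Ioo (t ε) (t ε + δ)) ?_
    (fun _ _ => isOpen_Ioo) fun ε _ => nonempty_Ioo.2 (lt_add_of_pos_right _ hδ)
  intro ε h ε' h' hne
  refine Set.disjoint_left.2 fun x hx hx' => ?_
  rcases hne.lt_or_gt with hlt | hlt
  · linarith [hstep ε ε' h h' hlt, hx.1, hx'.2]
  · linarith [hstep ε' ε h' h hlt, hx.2, hx'.1]

lemma isClosed_setOf_isExtremalEdge (hK : IsClosed K) (n : ℝ) :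
    IsClosed {u : E | ∃ a ∈ Icc (-n) n, ∃ t ∈ Icc (-n) n, IsExtremalEdge K p u δ a t} := by
  let C : Set (E × Icc (-n) n × Icc (-n) n) := {w | IsExtremalEdge K p w.1 δ w.2.1 w.2.2}
  have hC : IsClosed C := by
    have hleft : IsClosed {w : E × Icc (-n) n × Icc (-n) n |
        (w.2.1 : ℝ) • p + (w.2.2 : ℝ) • w.1 ∈ K} :=
      hK.preimage (by fun_prop)
    have hright : IsClosed {w : E × Icc (-n) n × Icc (-n) n |
        (w.2.1 : ℝ) • p + ((w.2.2 : ℝ) + δ) • w.1 ∈ K} := hK.preimage (by fun_prop)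
    have hmax : IsClosed {w : E × Icc (-n) n × Icc (-n) n |
        ∀ a' t' : ℝ, a' • p + t' • w.1 ∈ interior K → a' ≤ w.2.1} := by
      simp only [Set.ofPred_forall]
      refine isClosed_iInter fun a' => isClosed_iInter fun t' => ?_
      exact isClosed_imp (isOpen_interior.preimage (by fun_prop))
        (isClosed_le (by fun_prop) (by fun_prop))
    convert hleft.inter (hright.inter hmax) using 1
    ext w
    exact ⟨fun h => ⟨h.1, h.2, h.3⟩, fun h => ⟨h.1, h.2.1, h.2.2⟩⟩
  convert isClosedMap_fst_of_compactSpace C hC using 1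
  ext u
  constructor
  · rintro ⟨a, ha, t, ht, h⟩
    exact ⟨(u, ⟨a, ha⟩, ⟨t, ht⟩), h, rfl⟩
  · rintro ⟨⟨u, a, t⟩, h, rfl⟩
    exact ⟨a, a.2, t, t.2, h⟩

lemma exists_isExtremalEdge_of_not_noExtremalEdge (hconv : Convex ℝ K) (h : ¬NoExtremalEdge K p u) :
    ∃ n : ℕ, ∃ a ∈ Icc (-(n : ℝ)) n, ∃ t ∈ Icc (-(n : ℝ)) n,
      IsExtremalEdge K p u (1 / (n + 1)) a t := by
  obtain ⟨a, t, δ, hδ, ht, htδ, hmax⟩ : ∃ a t δ : ℝ, 0 < δ ∧ a • p + t • u ∈ K ∧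
      a • p + (t + δ) • u ∈ K ∧ ∀ a' t' : ℝ, a' • p + t' • u ∈ K → a' ≤ a := by
    simp only [NoExtremalEdge] at h
    push Not at h
    obtain ⟨a, z₁, z₂, h₁, h₂, hmax, hne⟩ := h
    rcases hne.lt_or_gt with hlt | hlt
    · exact ⟨a, z₁, z₂ - z₁, sub_pos.2 hlt, h₁, by rwa [add_sub_cancel], hmax⟩
    · exact ⟨a, z₂, z₁ - z₂, sub_pos.2 hlt, h₂, by rwa [add_sub_cancel], hmax⟩
  obtain ⟨m, hm⟩ := exists_nat_one_div_lt hδ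
  obtain ⟨k, hk⟩ := exists_nat_ge (max |a| |t|)
  have hmn : (m : ℝ) ≤ (max m k : ℕ) := mod_cast le_max_left m k
  have hkn : max |a| |t| ≤ (max m k : ℕ) := hk.trans (mod_cast le_max_right m k)
  have hδ' : 1 / (((max m k : ℕ) : ℝ) + 1) ≤ δ :=
    (one_div_le_one_div_of_le (by positivity) (by linarith)).trans hm.le
  refine ⟨max m k, a, abs_le.1 ((le_max_left _ _).trans hkn), t,
    abs_le.1 ((le_max_right _ _).trans hkn), ht, ?_,
    fun a' t' h' => hmax a' t' (interior_subset h')⟩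
  have hcombo := hconv.add_smul_sub_mem ht htδ
    (t := 1 / (((max m k : ℕ) : ℝ) + 1) / δ) ⟨by positivity, (div_le_one hδ).2 hδ'⟩
  convert hcombo using 1
  rw [add_sub_add_left_eq_sub, ← sub_smul, add_sub_cancel_left, smul_smul, div_mul_cancel₀ _ hδ.ne']
  module

end Edge

section Generic

variable {E : Type*} [NormedAddCommGroup E] [NormedSpace ℝ E] [FiniteDimensional ℝ E]
  [MeasurableSpace E] [BorelSpace E] {μ : Measure E} [μ.IsAddHaarMeasure] {K : Set E} {p : E}

lemma ae_noExtremalEdge (hK : IsClosed K) (hconv : Convex ℝ K) (h0 : 0 ∈ interior K) :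
    ∀ᵐ u ∂μ, NoExtremalEdge K p u := by
  have hnull : ∀ n : ℕ, ∀ᵐ u ∂μ, u ∉ {u | ∃ a ∈ Icc (-(n : ℝ)) n, ∃ t ∈ Icc (-(n : ℝ)) n,
      IsExtremalEdge K p u (1 / (n + 1)) a t} := by
    intro n
    refine ae_mem_of_ae_add_linearMap_mem (LinearMap.toSpanSingleton ℝ E p) volume μ
      (isClosed_setOf_isExtremalEdge hK n).measurableSet.compl fun u => ?_
    have hcount := countable_setOf_exists_isExtremalEdge (p := p) (u := u) hconv h0
      (δ := 1 / ((n : ℝ) + 1)) (by positivity)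
    filter_upwards [hcount.ae_notMem volume] with ε hε
    rintro ⟨a, -, t, -, h⟩
    exact hε ⟨a, t, h⟩
  filter_upwards [ae_all_iff.2 hnull] with u hu
  by_contra h
  obtain ⟨n, hn⟩ := exists_isExtremalEdge_of_not_noExtremalEdge hconv h
  exact hu n hn

lemma ae_isGenericDirection (hK : IsClosed K) (hconv : Convex ℝ K) (h0 : 0 ∈ interior K)
    (hp : p ∈ interior K) : ∀ᵐ u ∂μ, IsGenericDirection K p u := by
  obtain ⟨C, hC⟩ := (hconv.translate_preimage_right p).lipschitz_gauge
    (mem_nhds_zero_preimage_add hp)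
  have hdiff : ∀ᵐ u ∂μ, DifferentiableAt ℝ (gauge ((fun x => p + x) ⁻¹' K)) u :=
    hC.ae_differentiableAt
  have hdiff_neg : ∀ᵐ u ∂μ, DifferentiableAt ℝ (gauge ((fun x => p + x) ⁻¹' K)) (-u) :=
    (Measure.measurePreserving_neg μ).quasiMeasurePreserving.ae hdiff
  filter_upwards [hdiff, hdiff_neg, ae_noExtremalEdge hK hconv h0] with u hu hu' hedge
  exact ⟨hedge, hu, hu'⟩

lemma ae_linearIndependent_pair (hE : 1 < finrank ℝ E) (hp : p ≠ 0) :
    ∀ᵐ u ∂μ, LinearIndependent ℝ ![p, u] := by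
  have hne : Submodule.span ℝ {p} ≠ ⊤ := by
    intro htop
    have hrank := finrank_span_singleton (K := ℝ) hp
    rw [htop, finrank_top] at hrank
    exact hE.ne' hrank
  filter_upwards [measure_eq_zero_iff_ae_notMem.1 (Measure.addHaar_submodule μ _ hne)] with u hu
  exact (LinearIndependent.pair_iff' hp).2 fun a ha =>
    hu (Submodule.mem_span_singleton.2 ⟨a, ha⟩)

end Generic

/-! ### Change of coordinates -/

section Transfer

variable {E F : Type*} [NormedAddCommGroup E] [NormedSpace ℝ E] [NormedAddCommGroup F]
  [NormedSpace ℝ F] {K : Set E} {p u : F}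

lemma IsSymmetricBody.preimage (h : IsSymmetricBody K) (e : F ≃L[ℝ] E) :
    IsSymmetricBody (e ⁻¹' K) where
  isCompact := e.toHomeomorph.isCompact_preimage.2 h.isCompact
  convex := h.convex.linear_preimage e.toLinearMap
  neg_mem x hx := by simpa using h.neg_mem _ hx
  zero_mem_interior := preimage_interior_subset_interior_preimage e.continuous
    (by simpa using h.zero_mem_interior)

lemma HasSymmetricSections.preimage (e : F ≃L[ℝ] E) (h : HasSymmetricSections K (e p)) :
    HasSymmetricSections (e ⁻¹' K) p := by
  intro S hS
  obtain ⟨c, ⟨c, hc, rfl⟩, hsymm⟩ :=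
    h (S.map (e : F →ₗ[ℝ] E)) ((LinearEquiv.finrank_map_eq e.toLinearEquiv S).trans hS)
  exact ⟨c, hc, fun x hx hmem => by
    simpa using hsymm (e x) (Submodule.mem_map_of_mem hx) (by simpa using hmem)⟩

lemma HasSymmetricSections.preimage_add {q a : E} (h : HasSymmetricSections K (a + q)) :
    HasSymmetricSections ((fun x => a + x) ⁻¹' K) q := by
  intro S hS
  obtain ⟨c, hc, hsymm⟩ := h S hS
  exact ⟨c, hc, fun x hx hmem => by
    simpa [add_assoc] using hsymm x hx (by simpa [add_assoc] using hmem)⟩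

lemma IsGenericDirection.preimage (e : F ≃L[ℝ] E) (h : IsGenericDirection K (e p) (e u)) :
    IsGenericDirection (e ⁻¹' K) p u := by
  have hgauge : gauge ((fun x => p + x) ⁻¹' (e ⁻¹' K)) =
      gauge ((fun x => e p + x) ⁻¹' K) ∘ e := by
    ext x
    simp [gauge_def']
  refine ⟨fun a z₁ z₂ h₁ h₂ hmax => ?_, ?_, ?_⟩
  · exact h.noExtremalEdge a z₁ z₂ (by simpa using h₁) (by simpa using h₂)
      fun a' z' h' => hmax a' z' (by simpa using h')
  · rw [hgauge]
    exact h.differentiableAt_gauge.comp u e.differentiableAt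
  · rw [hgauge]
    refine DifferentiableAt.comp (-u) ?_ e.differentiableAt
    simpa using h.differentiableAt_gauge_neg

end Transfer

section Dense

variable {E : Type*} [NormedAddCommGroup E] [NormedSpace ℝ E] [FiniteDimensional ℝ E] {K : Set E}
  {p u : E}

lemma exists_continuousLinearEquiv_pole (hE : finrank ℝ E = 3) (hpu : LinearIndependent ℝ ![p, u]) :
    ∃ e : ((ℝ × ℝ) × ℝ) ≃L[ℝ] E, e (pole, 0) = p ∧ e (0, 1) = u := by
  obtain ⟨w, hw⟩ := exists_linearIndependent_cons_of_lt_finrank hpu (by omega)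
  let L : ((ℝ × ℝ) × ℝ) →ₗ[ℝ] E :=
    ((LinearMap.toSpanSingleton ℝ E p).coprod (LinearMap.toSpanSingleton ℝ E w)).coprod
      (LinearMap.toSpanSingleton ℝ E u)
  have hL : ∀ v, L v = v.1.1 • p + v.1.2 • w + v.2 • u := fun v => rfl
  have hinj : Function.Injective L := by
    refine (injective_iff_map_eq_zero L).2 fun v hv => ?_
    have hcoord := Fintype.linearIndependent_iff.1 hw ![v.1.2, v.1.1, v.2]
      (by rw [← hv, hL]; simp [Fin.sum_univ_three]; abel)
    exact Prod.ext (Prod.ext (hcoord 1) (hcoord 0)) (hcoord 2)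
  refine ⟨(LinearEquiv.ofInjectiveOfFinrankEq L hinj (by simp [hE])).toContinuousLinearEquiv,
    ?_, ?_⟩
  · change L _ = p
    simp [hL, pole]
  · change L _ = u
    simp [hL]

lemma IsSymmetricBody.isReflectionDirection (h : IsSymmetricBody K) (hE : finrank ℝ E = 3)
    (hp : p ∈ interior K) (hsec : HasSymmetricSections K p)
    (hpu : LinearIndependent ℝ ![p, u]) (hgen : IsGenericDirection K p u) :
    IsReflectionDirection K u := by
  obtain ⟨e, rfl, rfl⟩ := exists_continuousLinearEquiv_pole hE hpu
  have hvert := (h.preimage e).isReflectionDirection_vertical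
    (preimage_interior_subset_interior_preimage e.continuous hp) (hsec.preimage e) (hgen.preimage e)
  simpa [image_preimage_eq _ e.surjective] using hvert.image e.toLinearEquiv

theorem IsSymmetricBody.dense_isReflectionDirection (h : IsSymmetricBody K) (hE : finrank ℝ E = 3)
    (hp : p ∈ interior K) (hp0 : p ≠ 0) (hsec : HasSymmetricSections K p) :
    Dense {u | IsReflectionDirection K u} := by
  borelize E
  refine Measure.dense_of_ae (μ := Measure.addHaar) ?_
  filter_upwards [ae_isGenericDirection h.isCompact.isClosed h.convex h.zero_mem_interior hp,
    ae_linearIndependent_pair (by omega) hp0] with u hgen hpu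
  exact h.isReflectionDirection hE hp hsec hpu hgen

end Dense

/-! ### The false centre theorem -/

lemma mem_interior_preimage_add {G : Type*} [TopologicalSpace G] [AddGroup G] [ContinuousAdd G]
    {K : Set G} {a x : G} : x ∈ interior ((fun y => a + y) ⁻¹' K) ↔ a + x ∈ interior K := by
  rw [← Homeomorph.coe_addLeft, ← Homeomorph.preimage_interior]
  rfl

lemma isSymmetricBody_of_nonempty_interior {E : Type*} [NormedAddCommGroup E] [NormedSpace ℝ E]
    {K : Set E} (hK : IsCompact K) (hconv : Convex ℝ K)
    (hneg : ∀ x ∈ K, -x ∈ K) (hne : (interior K).Nonempty) : IsSymmetricBody K := by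
  refine ⟨hK, hconv, hneg, ?_⟩
  obtain ⟨x, hx⟩ := hne
  have hx' : -x ∈ interior K := neg_mem_interior_of_forall_neg_mem hneg hx
  simpa using hconv.interior.midpoint_mem hx hx'

section Main

variable {E : Type*} [NormedAddCommGroup E] [InnerProductSpace ℝ E] [FiniteDimensional ℝ E]
  {K : Set E} {p : E}

theorem exists_isSymmetricBody_preimage_add (hE : 3 ≤ finrank ℝ E)
    (hK : IsCompact K) (hconv : Convex ℝ K) (hp : p ∈ interior K)
    (hsec : HasSymmetricSections K p) (hns : ¬∀ x ∈ K, p + (p - x) ∈ K) :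
    ∃ a ≠ p, IsSymmetricBody ((fun x => a + x) ⁻¹' K) := by
  obtain ⟨c, hc0, hc⟩ : ∃ c ≠ 0, ∀ x, p + x ∈ K → p + (c - x) ∈ K := by
    refine exists_centre_of_hasSymmetricSections (K := (fun x => p + x) ⁻¹' K) hE
      ((Homeomorph.addLeft p).isCompact_preimage.2 hK) (hconv.translate_preimage_right p)
      (by rwa [mem_interior_preimage_add, add_zero])
      (HasSymmetricSections.preimage_add (a := p) (q := 0) (by rwa [add_zero]))
      fun h => hns fun x hx => ?_
    simpa using h (x - p) (by simpa using hx)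
  refine ⟨p + (1 / 2 : ℝ) • c, by simpa using hc0, isSymmetricBody_of_nonempty_interior
    ((Homeomorph.addLeft _).isCompact_preimage.2 hK) (hconv.translate_preimage_right _)
    (fun x hx => ?_) ⟨p - (p + (1 / 2 : ℝ) • c), ?_⟩⟩
  · have hmem := hc ((1 / 2 : ℝ) • c + x) (by rwa [← add_assoc])
    rw [mem_preimage]
    convert hmem using 1
    module
  · rwa [mem_interior_preimage_add, add_sub_cancel]

theorem exists_eq_image_closedBall_of_hasSymmetricSections (hE : finrank ℝ E = 3)
    (hK : IsCompact K) (hconv : Convex ℝ K) (hp : p ∈ interior K)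
    (hsec : HasSymmetricSections K p) (hns : ¬∀ x ∈ K, p + (p - x) ∈ K) :
    ∃ T : E ≃ᵃ[ℝ] E, K = T '' closedBall 0 1 := by
  have : Nontrivial E := nontrivial_of_finrank_pos (R := ℝ) (by omega)
  borelize E
  obtain ⟨a, hap, hsymm⟩ := exists_isSymmetricBody_preimage_add hE.ge hK hconv hp hsec hns
  have hdense := hsymm.dense_isReflectionDirection hE (p := p - a)
    (by rwa [mem_interior_preimage_add, add_sub_cancel]) (sub_ne_zero.2 hap.symm)
    (HasSymmetricSections.preimage_add (by rwa [add_sub_cancel]))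
  obtain ⟨T, hT⟩ := exists_linearEquiv_image_closedBall_of_dense_isReflectionDirection
    hsymm.isCompact hsymm.convex hsymm.mem_nhds_zero hdense
  refine ⟨T.toAffineEquiv.trans (AffineEquiv.constVAdd ℝ E a), ?_⟩
  calc K = (fun x => a + x) '' ((fun x => a + x) ⁻¹' K) :=
        (image_preimage_eq _ (add_left_surjective a)).symm
    _ = (fun x => a + x) '' (T '' closedBall 0 1) := by rw [hT]
    _ = _ := image_image _ _ _

end Main

lemma hasSymmetricSections_of_forall_isHyperplane {K : Set (Euc 3)} {p : Euc 3} (hp : p ∈ K)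
    (hsec : ∀ P : AffineSubspace ℝ (Euc 3), IsHyperplane P → p ∈ P →
      ∃ z : Euc 3,
        (fun y => z + (z - y)) '' ((P : Set (Euc 3)) ∩ K) = (P : Set (Euc 3)) ∩ K) :
    HasSymmetricSections K p := by
  intro S hS
  have hmem : ∀ x, p + x ∈ AffineSubspace.mk' p S ↔ x ∈ S := fun x => by
    rw [AffineSubspace.mem_mk', vsub_eq_sub, add_sub_cancel_left]
  have hpP := AffineSubspace.self_mem_mk' p S
  obtain ⟨z, hz⟩ := hsec (AffineSubspace.mk' p S)
    ⟨⟨p, hpP⟩, by rw [AffineSubspace.direction_mk', hS]⟩ hpP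
  have hrefl : ∀ x ∈ S, p + x ∈ K → (2 : ℝ) • (z - p) - x ∈ S ∧
      p + ((2 : ℝ) • (z - p) - x) ∈ K := by
    intro x hx hxK
    have himage := hz.subset (mem_image_of_mem _ ⟨(hmem x).2 hx, hxK⟩)
    have heq : z + (z - (p + x)) = p + ((2 : ℝ) • (z - p) - x) := by module
    simp only [heq] at himage
    exact ⟨(hmem _).1 himage.1, himage.2⟩
  refine ⟨(2 : ℝ) • (z - p), ?_, fun x hx hxK => (hrefl x hx hxK).2⟩
  simpa using (hrefl 0 S.zero_mem (by rwa [add_zero])).1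

end FalseCentre

/-- The False Centre Theorem in `ℝ³`: if every plane section of `K`
through `p` is centrally symmetric and `p` is not a center of symmetry of `K`, then
`K` is an ellipsoid. -/
theorem stmt18 (K : Set (Euc 3)) (hK : IsConvexBody K) (p : Euc 3) (hp : p ∈ interior K)
    (hsec : ∀ P : AffineSubspace ℝ (Euc 3), IsHyperplane P → p ∈ P →
      ∃ z : Euc 3,
        (fun y => z + (z - y)) '' ((P : Set (Euc 3)) ∩ K) = (P : Set (Euc 3)) ∩ K)
    (hnc : (fun y => p + (p - y)) '' K ≠ K) :
    IsEllipsoidOfDim 3 K := by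
  obtain ⟨hcompact, hconv, -⟩ := hK
  have hns : ¬∀ x ∈ K, p + (p - x) ∈ K := fun hmem =>
    hnc (Subset.antisymm (image_subset_iff.2 hmem) fun x hx => ⟨_, hmem x hx, by simp⟩)
  obtain ⟨T, hT⟩ := FalseCentre.exists_eq_image_closedBall_of_hasSymmetricSections
    (by simp) hcompact hconv hp
    (FalseCentre.hasSymmetricSections_of_forall_isHyperplane (interior_subset hp) hsec) hns
  exact ⟨T, ⊤, by simp, by simpa using hT⟩
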